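/- Let d ≥ 2 and let K : ℝ^d → ℝ be continuous, isotropic, positive definite, whose radial profile is regularly varying (at infinity) with index α ∈ [0,1]; in the case α = 1 assume moreover K(x) ∼ x^{−1}(log x)^{−γ} as x → ∞ for some γ < 1; assume also that sup_{y ≥ x ≥ r} K(y)/K(x) − 1 → 0 as r → ∞ (automatic when α > 0). Let r(R) → ∞ and s(R) → ∞ be functions with s(R) ≤ r(R) ≤ R and, as R → ∞: if α ∈ [0,1), r(R) = o(R) and r(R) K(s(R)) = o(R K(R)); if α = 1, r(R) = R^{o(1)} and r(R) K(s(R)) (log s(R)) = o(R K(R) (log R)). Then, as R → ∞, Cap_K([0,R] × {0}^{d−1}) ∼ Cap_K(𝒮_{s(R),r(R),R} × {0}^{d−1}), where 𝒮_{s,r,R} = ∪_{1 ≤ i < ⌊R/r⌋} (i r + [0,s]) ⊂ ℝ. -/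

import Mathlib

open Filter MeasureTheory Asymptotics

/-- A function `L` is slowly varying (at infinity) if it is continuous and strictly positive
on `(0,∞)` and `L(ax)/L(x) → 1` as `x → ∞` for every `a > 0`. -/
def SlowlyVarying (L : ℝ → ℝ) : Prop :=
  ContinuousOn L (Set.Ioi 0) ∧ (∀ x : ℝ, 0 < x → 0 < L x) ∧
    ∀ a : ℝ, 0 < a → Tendsto (fun x => L (a * x) / L x) atTop (nhds 1)

/-- A continuous function `h` on `(0,∞)` is regularly varying (at infinity) with index `α`
if `h(x) ∼ x^(-α) L(x)` as `x → ∞` for some slowly varying `L`. -/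
def RegularlyVarying (h : ℝ → ℝ) (α : ℝ) : Prop :=
  ContinuousOn h (Set.Ioi 0) ∧
    ∃ L : ℝ → ℝ, SlowlyVarying L ∧
      Tendsto (fun x => h x / (x ^ (-α) * L x)) atTop (nhds 1)

/-- A kernel `K : ℝ^d → ℝ` is positive definite if all quadratic forms
`∑ i j, c i * c j * K (x i - x j)` are nonnegative. -/
def IsPosDefKernel {d : ℕ} (K : EuclideanSpace ℝ (Fin d) → ℝ) : Prop :=
  ∀ (n : ℕ) (x : Fin n → EuclideanSpace ℝ (Fin d)) (c : Fin n → ℝ),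
    0 ≤ ∑ i : Fin n, ∑ j : Fin n, c i * c j * K (x i - x j)

/-- The energy `E_K(μ) = ∫∫ K(x-y) dμ(x) dμ(y)`. -/
noncomputable def energyE {d : ℕ} (K : EuclideanSpace ℝ (Fin d) → ℝ)
    (μ : Measure (EuclideanSpace ℝ (Fin d))) : ℝ :=
  ∫ x, ∫ y, K (x - y) ∂μ ∂μ

/-- The capacity of `D` with respect to `K`: the reciprocal of the minimal energy of a
Borel probability measure supported on `D`. -/
noncomputable def capacityE {d : ℕ} (K : EuclideanSpace ℝ (Fin d) → ℝ)
    (D : Set (EuclideanSpace ℝ (Fin d))) : ℝ :=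
  (sInf {e : ℝ | ∃ μ : Measure (EuclideanSpace ℝ (Fin d)),
      IsProbabilityMeasure μ ∧ μ Dᶜ = 0 ∧ e = energyE K μ})⁻¹

/-- The coarse-grained set `𝒮_{s,r,R} = ∪_{1 ≤ i < ⌊R/r⌋} (i r + [0,s]) ⊂ ℝ`. -/
def condensedSet (s r R : ℝ) : Set ℝ :=
  ⋃ i ∈ Set.Ico 1 (Nat.floor (R / r)), Set.Icc ((i : ℝ) * r) ((i : ℝ) * r + s)

/-- Embedding of a subset of `ℝ` into `ℝ^d` as `S × {0}^{d-1}`. -/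
def lineEmbed (d : ℕ) (S : Set ℝ) : Set (EuclideanSpace ℝ (Fin d)) :=
  {x | ∀ i : Fin d, if (i : ℕ) = 0 then x i ∈ S else x i = 0}

/-!
Write `Φ(R) = ∫₀ᴿ |K|`. The uniform measure on `[0, R]` has energy of order `Φ(R) / R`, and so, by
the Cauchy–Schwarz inequality for mutual energies, every probability measure on `[0, R]` has energy
at least a constant times `Φ(R) / R`.

Conversely, a nearly optimal measure on `[0, R]` can be condensed into the set `𝒮` at little cost:
smooth it with the uniform law on an interval of length `εR`, collapse every cell of length `l r`,
with `l > 1` close to `1`, to a multiple of `r`, and convolve with the uniform law on `[0, s]`.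
Distances much larger than `r` shrink by a factor of at most about `l`, which changes `K` by a
factor close to `1`. By Cauchy–Schwarz again, the pairs at distance `O(r)` cost at most
`O(Φ(s) / s)` times their mass, and this mass is `O(r / (εR))` thanks to the smoothing. This is
negligible as soon as `r Φ(s) / s = o(Φ(R))`. Regular variation makes `Φ(x)` comparable to `x K(x)`
if `α < 1` and to `x K(x) log x` if `α = 1`, which turns this into the hypothesis on `r` and `s`.
-/

section Sampling

variable {Ω : Type*} [MeasurableSpace Ω] {P : Measure Ω} [IsProbabilityMeasure P] {F : Ω → Ω → ℝ}
  {C : ℝ}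

lemma integral_pi_eval_pair (hF : Measurable (Function.uncurry F)) (hb : ∀ x y, |F x y| ≤ C)
    {ι : Type*} [Fintype ι] {i j : ι} (hij : i ≠ j) :
    ∫ ω, F (ω i) (ω j) ∂Measure.pi (fun _ : ι => P) = ∫ x, ∫ y, F x y ∂P ∂P := by
  have hind := (ProbabilityTheory.iIndepFun_pi (μ := fun _ : ι => P) (X := fun _ => id)
    (fun _ => aemeasurable_id)).indepFun hij
  have hmap : (Measure.pi fun _ : ι => P).map (fun ω => (ω i, ω j)) = P.prod P := by
    refine ((ProbabilityTheory.indepFun_iff_map_prod_eq_prod_map_map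
      (measurable_pi_apply i).aemeasurable (measurable_pi_apply j).aemeasurable).1 hind).trans ?_
    exact congrArg₂ _ (measurePreserving_eval (fun _ : ι => P) i).map_eq
      (measurePreserving_eval (fun _ : ι => P) j).map_eq
  have hint : Integrable (Function.uncurry F) (P.prod P) :=
    Integrable.of_bound hF.aestronglyMeasurable C (Eventually.of_forall fun p => hb p.1 p.2)
  calc _ = ∫ p, Function.uncurry F p ∂(Measure.pi fun _ : ι => P).map (fun ω => (ω i, ω j)) :=
        (integral_map (by fun_prop) hF.aestronglyMeasurable).symm
    _ = _ := by rw [hmap, integral_prod _ hint]; rfl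

/- Average the nonnegative sums over `n` independent samples: the `n` diagonal terms are bounded
while each off-diagonal term contributes the double integral. -/
lemma integral_integral_nonneg_of_sum_nonneg (hF : Measurable (Function.uncurry F))
    (hb : ∀ x y, |F x y| ≤ C)
    (hsum : ∀ (n : ℕ) (ω : Fin n → Ω), 0 ≤ ∑ i, ∑ j, F (ω i) (ω j)) :
    0 ≤ ∫ x, ∫ y, F x y ∂P ∂P := by
  set B := ∫ x, ∫ y, F x y ∂P ∂P
  have average (n : ℕ) : 0 ≤ (n : ℝ) * n * B + n * (C + |B|) := by
    let Q : Measure (Fin n → Ω) := Measure.pi fun _ => P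
    have hint (i j : Fin n) : Integrable (fun ω : Fin n → Ω => F (ω i) (ω j)) Q :=
      Integrable.of_bound (hF.comp (g := Function.uncurry F) (f := fun ω : Fin n → Ω => (ω i, ω j))
        (by fun_prop)).aestronglyMeasurable C (Eventually.of_forall fun ω => hb _ _)
    have term_le (i j : Fin n) :
        ∫ ω, F (ω i) (ω j) ∂Q ≤ B + if i = j then C + |B| else 0 := by
      split_ifs with hij
      · have h := norm_integral_le_of_norm_le_const (μ := Q) (f := fun ω => F (ω i) (ω j))
          (Eventually.of_forall fun _ => hb _ _)
        rw [probReal_univ, mul_one] at h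
        linarith [(abs_le.1 h).2, neg_abs_le B]
      · rw [integral_pi_eval_pair hF hb hij, add_zero]
    calc (0 : ℝ) ≤ ∫ ω, ∑ i, ∑ j, F (ω i) (ω j) ∂Q := integral_nonneg fun ω => hsum n ω
      _ = ∑ i, ∑ j, ∫ ω, F (ω i) (ω j) ∂Q := by
        rw [integral_finsetSum _ fun i _ => integrable_finsetSum _ fun j _ => hint i j]
        simp_rw [integral_finsetSum _ fun j _ => hint _ j]
      _ ≤ ∑ i : Fin n, ∑ j : Fin n, (B + if i = j then C + |B| else 0) :=
        Finset.sum_le_sum fun i _ => Finset.sum_le_sum fun j _ => term_le i j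
      _ = (n : ℝ) * n * B + n * (C + |B|) := by
        simp only [Finset.sum_add_distrib, Finset.sum_const, Finset.card_univ, Fintype.card_fin,
          nsmul_eq_mul, Finset.sum_ite_eq, Finset.mem_univ, if_true]
        ring
  by_contra! hneg
  obtain ⟨n, hn⟩ := exists_nat_gt ((C + |B|) / -B)
  rw [div_lt_iff₀ (by linarith)] at hn
  have hn_pos : (0 : ℝ) < n := by
    rcases (Nat.cast_nonneg n : (0 : ℝ) ≤ n).eq_or_lt with h | h
    · have := (abs_nonneg _).trans (hb (Classical.choice P.nonempty_of_neZero)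
        (Classical.choice P.nonempty_of_neZero))
      rw [← h] at hn
      linarith [abs_nonneg B]
    · exact h
  nlinarith [average n]

end Sampling

lemma integral_prod_fst_sub_mul_snd {α β : Type*} [MeasurableSpace α] [MeasurableSpace β]
    {μ : Measure α} {ν : Measure β} [IsProbabilityMeasure μ] [IsProbabilityMeasure ν] {f : α → ℝ}
    {g : β → ℝ} (hf : Integrable f μ) (hg : Integrable g ν) (t : ℝ) :
    ∫ p, (f p.1 - t * g p.2) ∂(μ.prod ν) = ∫ x, f x ∂μ - t * ∫ y, g y ∂ν := by
  rw [integral_sub (hf.comp_fst ν) ((hg.comp_snd μ).const_mul t), integral_const_mul,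
    integral_fun_fst, integral_fun_snd, probReal_univ, probReal_univ, one_smul, one_smul]

/-- Measurable even positive definite functions on a commutative group. Evenness is part of the
notion: real test coefficients only see the even part of `κ`. -/
structure IsPositiveDefinite {G : Type*} [AddCommGroup G] [MeasurableSpace G] (κ : G → ℝ) :
    Prop where
  measurable : Measurable κ
  even : ∀ t, κ (-t) = κ t
  sum_nonneg : ∀ (n : ℕ) (x : Fin n → G) (c : Fin n → ℝ),
    0 ≤ ∑ i, ∑ j, c i * c j * κ (x i - x j)

/-- The potential `x ↦ ∫ κ (x - y) dν(y)` of the measure `ν`. -/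
noncomputable def potential {G : Type*} [Sub G] [MeasurableSpace G] (κ : G → ℝ) (ν : Measure G)
    (x : G) : ℝ :=
  ∫ y, κ (x - y) ∂ν

/-- The mutual energy `∫∫ κ (x - y) dν(y) dμ(x)`; the energy of `μ` is `mutualEnergy κ μ μ`. -/
noncomputable def mutualEnergy {G : Type*} [Sub G] [MeasurableSpace G] (κ : G → ℝ)
    (μ ν : Measure G) : ℝ :=
  ∫ x, potential κ ν x ∂μ

/-- The infimum of the energies of the probability measures carried by `D`, i.e. the reciprocal of
the capacity of `D`. -/
noncomputable def minEnergy {G : Type*} [Sub G] [MeasurableSpace G] (κ : G → ℝ) (D : Set G) : ℝ :=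
  sInf {e | ∃ μ : Measure G, IsProbabilityMeasure μ ∧ μ Dᶜ = 0 ∧ e = mutualEnergy κ μ μ}

/-- The average of `κ` over the differences of two independent samples of `lam`. It is the kernel
seen by `μ` when the energy of the convolution `μ ∗ lam` is computed. -/
noncomputable def smoothedKernel {G : Type*} [AddGroup G] [MeasurableSpace G] (κ : G → ℝ)
    (lam : Measure G) (t : G) : ℝ :=
  ∫ u, potential κ lam (t + u) ∂lam

lemma le_minEnergy {G : Type*} [Sub G] [MeasurableSpace G] {κ : G → ℝ} {D : Set G} {c : ℝ}
    (hD : ∃ μ : Measure G, IsProbabilityMeasure μ ∧ μ Dᶜ = 0)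
    (hc : ∀ μ : Measure G, IsProbabilityMeasure μ → μ Dᶜ = 0 → c ≤ mutualEnergy κ μ μ) :
    c ≤ minEnergy κ D := by
  obtain ⟨μ, hμ, hμD⟩ := hD
  refine le_csInf ⟨_, μ, hμ, hμD, rfl⟩ ?_
  rintro _ ⟨ν, hν, hνD, rfl⟩
  exact hc ν hν hνD

namespace IsPositiveDefinite

variable {G : Type*} [AddCommGroup G] [MeasurableSpace G] {κ : G → ℝ}

lemma sum_nonneg_of_fintype (hκ : IsPositiveDefinite κ) {ι : Type*} [Fintype ι] (x : ι → G)
    (c : ι → ℝ) : 0 ≤ ∑ i, ∑ j, c i * c j * κ (x i - x j) := by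
  let e := (Fintype.equivFin ι).symm
  refine (hκ.sum_nonneg (Fintype.card ι) (x ∘ e) (c ∘ e)).trans_eq ?_
  rw [← e.sum_comp]
  exact Finset.sum_congr rfl fun i _ => e.sum_comp fun j => c (e i) * c j * κ (x (e i) - x j)

lemma abs_le (hκ : IsPositiveDefinite κ) (t : G) : |κ t| ≤ κ 0 := by
  have hadd := hκ.sum_nonneg 2 ![t, 0] ![1, 1]
  have hsub := hκ.sum_nonneg 2 ![t, 0] ![1, -1]
  simp only [Fin.sum_univ_two, Matrix.cons_val_zero, Matrix.cons_val_one, sub_self, sub_zero,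
    zero_sub, hκ.even] at hadd hsub
  rw [_root_.abs_le]
  constructor <;> linarith

lemma zero_nonneg (hκ : IsPositiveDefinite κ) : 0 ≤ κ 0 := (abs_nonneg _).trans (hκ.abs_le 0)

lemma even_sub (hκ : IsPositiveDefinite κ) (x y : G) : κ (x - y) = κ (y - x) := by
  rw [← hκ.even, neg_sub]

lemma integrable_comp (hκ : IsPositiveDefinite κ) {Ω : Type*} [MeasurableSpace Ω] {P : Measure Ω}
    [IsFiniteMeasure P] {f : Ω → G} (hf : Measurable f) : Integrable (fun ω => κ (f ω)) P :=
  Integrable.of_bound (hκ.measurable.comp hf).aestronglyMeasurable (κ 0)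
    (Eventually.of_forall fun _ => hκ.abs_le _)

variable {μ ν : Measure G}

lemma abs_potential_le (hκ : IsPositiveDefinite κ) [IsProbabilityMeasure ν] (x : G) :
    |potential κ ν x| ≤ κ 0 := by
  simpa [potential] using norm_integral_le_of_norm_le_const (μ := ν) (f := fun y => κ (x - y))
    (Eventually.of_forall fun _ => hκ.abs_le _)

lemma abs_smoothedKernel_le (hκ : IsPositiveDefinite κ) [IsProbabilityMeasure ν] (t : G) :
    |smoothedKernel κ ν t| ≤ κ 0 := by
  simpa [smoothedKernel] using norm_integral_le_of_norm_le_const (μ := ν)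
    (f := fun u => potential κ ν (t + u)) (Eventually.of_forall fun _ => hκ.abs_potential_le _)

variable [MeasurableSub₂ G]

lemma measurable_potential (hκ : IsPositiveDefinite κ) [SFinite ν] :
    Measurable (potential κ ν) := by
  have h : StronglyMeasurable fun p : G × G => κ (p.1 - p.2) :=
    (hκ.measurable.comp measurable_sub).stronglyMeasurable
  exact h.integral_prod_right.measurable

lemma integrable_potential_comp (hκ : IsPositiveDefinite κ) {Ω : Type*} [MeasurableSpace Ω]
    {P : Measure Ω} [IsFiniteMeasure P] [IsProbabilityMeasure ν] {f : Ω → G} (hf : Measurable f) :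
    Integrable (fun ω => potential κ ν (f ω)) P :=
  Integrable.of_bound (hκ.measurable_potential.comp hf).aestronglyMeasurable (κ 0)
    (Eventually.of_forall fun _ => hκ.abs_potential_le _)

lemma integrable_potential (hκ : IsPositiveDefinite κ) [IsFiniteMeasure μ]
    [IsProbabilityMeasure ν] : Integrable (potential κ ν) μ :=
  hκ.integrable_potential_comp measurable_id

lemma mutualEnergy_comm (hκ : IsPositiveDefinite κ) [IsFiniteMeasure μ] [IsFiniteMeasure ν] :
    mutualEnergy κ μ ν = mutualEnergy κ ν μ := by
  simp only [mutualEnergy, potential]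
  rw [integral_integral_swap (hκ.integrable_comp measurable_sub)]
  simp only [hκ.even_sub]

lemma integrable_potential_sub_const_mul (hκ : IsPositiveDefinite κ) {lam : Measure G}
    [IsFiniteMeasure lam] [IsProbabilityMeasure μ] [IsProbabilityMeasure ν] (t : ℝ) :
    Integrable (fun x => potential κ μ x - t * potential κ ν x) lam :=
  hκ.integrable_potential.sub (hκ.integrable_potential.const_mul t)

lemma integral_potential_sub_const_mul (hκ : IsPositiveDefinite κ) {lam : Measure G}
    [IsFiniteMeasure lam] [IsProbabilityMeasure μ] [IsProbabilityMeasure ν] (t : ℝ) :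
    ∫ x, (potential κ μ x - t * potential κ ν x) ∂lam =
      mutualEnergy κ lam μ - t * mutualEnergy κ lam ν := by
  rw [integral_sub hκ.integrable_potential (hκ.integrable_potential.const_mul t),
    integral_const_mul]
  rfl

lemma mutualEnergy_quadratic_nonneg (hκ : IsPositiveDefinite κ) [IsProbabilityMeasure μ]
    [IsProbabilityMeasure ν] (t : ℝ) :
    0 ≤ mutualEnergy κ ν ν * (t * t) + (-2 * mutualEnergy κ μ ν) * t + mutualEnergy κ μ μ := by
  let h : G → G × G → ℝ := fun x q => κ (x - q.1) - t * κ (x - q.2)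
  let F : G × G → G × G → ℝ := fun p q => h p.1 q - t * h p.2 q
  have abs_le_of_le {a b C : ℝ} (ha : |a| ≤ C) (hb : |b| ≤ C) : |a - t * b| ≤ C + |t| * C :=
    (abs_sub _ _).trans <| add_le_add ha <| by rw [abs_mul]; gcongr
  have hF : Measurable (Function.uncurry F) := by
    have := hκ.measurable
    fun_prop
  have hF_sum (n : ℕ) (ω : Fin n → G × G) : 0 ≤ ∑ i, ∑ j, F (ω i) (ω j) := by
    refine (hκ.sum_nonneg_of_fintype (Sum.elim (fun i => (ω i).1) fun i => (ω i).2)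
      (Sum.elim (fun _ => 1) fun _ => -t)).trans_eq ?_
    simp only [Fintype.sum_sum_type, Sum.elim_inl, Sum.elim_inr, ← Finset.sum_add_distrib]
    refine Finset.sum_congr rfl fun i _ => Finset.sum_congr rfl fun j _ => ?_
    simp only [F, h]
    ring
  have integral_h (x : G) : ∫ q, h x q ∂(μ.prod ν) = potential κ μ x - t * potential κ ν x :=
    integral_prod_fst_sub_mul_snd (hκ.integrable_comp (by fun_prop))
      (hκ.integrable_comp (by fun_prop)) t
  have integrable_h (x : G) : Integrable (h x) (μ.prod ν) :=
    (hκ.integrable_comp (by fun_prop)).sub ((hκ.integrable_comp (by fun_prop)).const_mul t)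
  calc (0 : ℝ) ≤ ∫ p, ∫ q, F p q ∂(μ.prod ν) ∂(μ.prod ν) :=
        integral_integral_nonneg_of_sum_nonneg hF (fun p q => abs_le_of_le
          (abs_le_of_le (hκ.abs_le _) (hκ.abs_le _)) (abs_le_of_le (hκ.abs_le _) (hκ.abs_le _)))
          hF_sum
    _ = ∫ p, ((potential κ μ p.1 - t * potential κ ν p.1) -
          t * (potential κ μ p.2 - t * potential κ ν p.2)) ∂(μ.prod ν) := by
        simp only [F, integral_sub (integrable_h _) ((integrable_h _).const_mul t),
          integral_const_mul, integral_h]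
    _ = _ := by
        rw [integral_prod_fst_sub_mul_snd (hκ.integrable_potential_sub_const_mul t)
          (hκ.integrable_potential_sub_const_mul t), hκ.integral_potential_sub_const_mul,
          hκ.integral_potential_sub_const_mul, hκ.mutualEnergy_comm (μ := ν) (ν := μ)]
        ring

lemma mutualEnergy_self_nonneg (hκ : IsPositiveDefinite κ) [IsProbabilityMeasure μ] :
    0 ≤ mutualEnergy κ μ μ := by
  simpa using hκ.mutualEnergy_quadratic_nonneg (μ := μ) (ν := μ) 0

lemma minEnergy_le (hκ : IsPositiveDefinite κ) {D : Set G} [IsProbabilityMeasure μ]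
    (hμ : μ Dᶜ = 0) : minEnergy κ D ≤ mutualEnergy κ μ μ := by
  refine csInf_le ⟨0, ?_⟩ ⟨μ, inferInstance, hμ, rfl⟩
  rintro _ ⟨ν, _, -, rfl⟩
  exact hκ.mutualEnergy_self_nonneg

lemma sq_mutualEnergy_le (hκ : IsPositiveDefinite κ) [IsProbabilityMeasure μ]
    [IsProbabilityMeasure ν] :
    mutualEnergy κ μ ν ^ 2 ≤ mutualEnergy κ μ μ * mutualEnergy κ ν ν := by
  have h := discrim_le_zero (hκ.mutualEnergy_quadratic_nonneg (μ := μ) (ν := ν))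
  rw [discrim] at h
  linarith

lemma mutualEnergy_le (hκ : IsPositiveDefinite κ) [IsProbabilityMeasure μ]
    [IsProbabilityMeasure ν] {e : ℝ} (hμ : mutualEnergy κ μ μ ≤ e) (hν : mutualEnergy κ ν ν ≤ e) :
    mutualEnergy κ μ ν ≤ e := by
  linarith [hκ.mutualEnergy_quadratic_nonneg (μ := μ) (ν := ν) 1]

section Smoothing

variable [MeasurableAdd₂ G] {lam : Measure G} [IsProbabilityMeasure lam]

lemma measurable_smoothedKernel (hκ : IsPositiveDefinite κ) :
    Measurable (smoothedKernel κ lam) := by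
  have h : StronglyMeasurable fun p : G × G => potential κ lam (p.1 + p.2) :=
    (hκ.measurable_potential.comp measurable_add).stronglyMeasurable
  exact h.integral_prod_right.measurable

lemma smoothedKernel_le_mutualEnergy (hκ : IsPositiveDefinite κ) (t : G) :
    smoothedKernel κ lam t ≤ mutualEnergy κ lam lam := by
  have hshift : Measurable (t + ·) := measurable_const_add t
  have := Measure.isProbabilityMeasure_map (μ := lam) hshift.aemeasurable
  have potential_shift (x : G) : potential κ (lam.map (t + ·)) (t + x) = potential κ lam x := by
    have hκ_meas : Measurable fun y => κ (t + x - y) := hκ.measurable.comp (by fun_prop)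
    rw [potential, integral_map hshift.aemeasurable hκ_meas.aestronglyMeasurable]
    simp only [add_sub_add_left_eq_sub, potential]
  have energy_shift (ν : Measure G) [IsProbabilityMeasure ν] :
      mutualEnergy κ (lam.map (t + ·)) ν = ∫ u, potential κ ν (t + u) ∂lam :=
    integral_map hshift.aemeasurable hκ.measurable_potential.aestronglyMeasurable
  rw [smoothedKernel, ← energy_shift lam]
  refine hκ.mutualEnergy_le (le_of_eq ?_) le_rfl
  rw [energy_shift, mutualEnergy]
  simp only [potential_shift]

lemma integrable_smoothedKernel_comp (hκ : IsPositiveDefinite κ) {Ω : Type*} [MeasurableSpace Ω]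
    {P : Measure Ω} [IsFiniteMeasure P] {f : Ω → G} (hf : Measurable f) :
    Integrable (fun ω => smoothedKernel κ lam (f ω)) P :=
  Integrable.of_bound (hκ.measurable_smoothedKernel.comp hf).aestronglyMeasurable (κ 0)
    (Eventually.of_forall fun _ => hκ.abs_smoothedKernel_le _)

lemma mutualEnergy_conv_self (hκ : IsPositiveDefinite κ) [IsProbabilityMeasure μ] :
    mutualEnergy κ (μ ∗ lam) (μ ∗ lam) = ∫ p, smoothedKernel κ lam (p.1 - p.2) ∂(μ.prod μ) := by
  have potential_conv (z : G) : potential κ (μ ∗ lam) z = ∫ y, potential κ lam (z - y) ∂μ := by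
    rw [potential, integral_conv (hκ.integrable_comp (by fun_prop))]
    simp only [sub_add_eq_sub_sub, potential]
  rw [integral_prod _ (hκ.integrable_smoothedKernel_comp measurable_sub), mutualEnergy,
    integral_conv hκ.integrable_potential]
  refine integral_congr_ae (Eventually.of_forall fun x => ?_)
  simp only [potential_conv, smoothedKernel]
  rw [integral_integral_swap (hκ.integrable_potential_comp (by fun_prop))]
  simp only [sub_add_eq_add_sub]

lemma mutualEnergy_conv_le (hκ : IsPositiveDefinite κ) [IsProbabilityMeasure μ] :
    mutualEnergy κ (μ ∗ lam) (μ ∗ lam) ≤ mutualEnergy κ μ μ := by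
  rw [Measure.conv_comm, hκ.mutualEnergy_conv_self]
  calc ∫ p, smoothedKernel κ μ (p.1 - p.2) ∂(lam.prod lam)
      ≤ ∫ _, mutualEnergy κ μ μ ∂(lam.prod lam) :=
        integral_mono (hκ.integrable_smoothedKernel_comp measurable_sub) (integrable_const _)
          fun p => hκ.smoothedKernel_le_mutualEnergy _
    _ = mutualEnergy κ μ μ := by simp

lemma smoothedKernel_le_of_forall (hκ : IsPositiveDefinite κ) {S : Set G} (hS : lam Sᶜ = 0)
    {t : G} {c : ℝ} (hc : ∀ u ∈ S, ∀ v ∈ S, κ (t + (u - v)) ≤ c) :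
    smoothedKernel κ lam t ≤ c := by
  have hmem : ∀ᵐ u ∂lam, u ∈ S := mem_ae_iff.2 hS
  have potential_le {u : G} (hu : u ∈ S) : potential κ lam (t + u) ≤ c := by
    calc potential κ lam (t + u) ≤ ∫ _, c ∂lam := by
          refine integral_mono_ae (hκ.integrable_comp (by fun_prop)) (integrable_const _) ?_
          filter_upwards [hmem] with v hv
          rw [add_sub_assoc]
          exact hc u hu v hv
      _ = c := by simp
  calc smoothedKernel κ lam t ≤ ∫ _, c ∂lam := by
        refine integral_mono_ae (hκ.integrable_potential_comp (by fun_prop)) (integrable_const _) ?_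
        filter_upwards [hmem] with u hu using potential_le hu
    _ = c := by simp

lemma mutualEnergy_map_conv_self (hκ : IsPositiveDefinite κ) [IsProbabilityMeasure μ] {τ : G → G}
    (hτ : Measurable τ) :
    mutualEnergy κ ((μ.map τ) ∗ lam) ((μ.map τ) ∗ lam) =
      ∫ p, smoothedKernel κ lam (τ p.1 - τ p.2) ∂(μ.prod μ) := by
  have := Measure.isProbabilityMeasure_map (μ := μ) hτ.aemeasurable
  rw [hκ.mutualEnergy_conv_self, Measure.map_prod_map _ _ hτ hτ]
  exact integral_map (hτ.prodMap hτ).aemeasurable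
    (hκ.measurable_smoothedKernel.comp measurable_sub).aestronglyMeasurable

/- The set `A` collects the close pairs, where Cauchy–Schwarz is the only available bound, and `B`
the pairs at which `κ` may be negative. -/
lemma mutualEnergy_map_conv_le (hκ : IsPositiveDefinite κ) [IsProbabilityMeasure μ] {τ : G → G}
    (hτ : Measurable τ) {A B : Set (G × G)} (hA : MeasurableSet A) (hB : MeasurableSet B) {Θ : ℝ}
    (hΘ : 0 ≤ Θ)
    (hA_compl : ∀ p ∉ A, smoothedKernel κ lam (τ p.1 - τ p.2) ≤ Θ * κ (p.1 - p.2))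
    (hB_compl : ∀ p ∉ B, 0 ≤ κ (p.1 - p.2)) :
    mutualEnergy κ ((μ.map τ) ∗ lam) ((μ.map τ) ∗ lam) ≤ Θ * mutualEnergy κ μ μ +
      (mutualEnergy κ lam lam * (μ.prod μ).real A + Θ * κ 0 * (μ.prod μ).real B) := by
  let a : G × G → ℝ := A.indicator fun _ => mutualEnergy κ lam lam
  let b : G × G → ℝ := B.indicator fun _ => Θ * κ 0
  have hκ_int : Integrable (fun p : G × G => Θ * κ (p.1 - p.2)) (μ.prod μ) :=
    (hκ.integrable_comp measurable_sub).const_mul Θ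
  have ha_int : Integrable a (μ.prod μ) := (integrable_const _).indicator hA
  have hb_int : Integrable b (μ.prod μ) := (integrable_const _).indicator hB
  have hab_int : Integrable (fun p => a p + b p) (μ.prod μ) := ha_int.add hb_int
  have hb_add_nonneg (p : G × G) : 0 ≤ Θ * κ (p.1 - p.2) + b p := by
    by_cases hp : p ∈ B
    · rw [show b p = Θ * κ 0 from Set.indicator_of_mem hp _, ← mul_add]
      exact mul_nonneg hΘ (by linarith [neg_le_of_abs_le (hκ.abs_le (p.1 - p.2))])
    · rw [show b p = 0 from Set.indicator_of_notMem hp _, add_zero]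
      exact mul_nonneg hΘ (hB_compl p hp)
  have hb_nonneg (p : G × G) : 0 ≤ b p :=
    Set.indicator_nonneg (fun _ _ => mul_nonneg hΘ hκ.zero_nonneg) p
  have pointwise (p : G × G) :
      smoothedKernel κ lam (τ p.1 - τ p.2) ≤ Θ * κ (p.1 - p.2) + (a p + b p) := by
    by_cases hp : p ∈ A
    · rw [show a p = mutualEnergy κ lam lam from Set.indicator_of_mem hp _]
      linarith [hκ.smoothedKernel_le_mutualEnergy (lam := lam) (τ p.1 - τ p.2), hb_add_nonneg p]
    · rw [show a p = 0 from Set.indicator_of_notMem hp _]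
      linarith [hA_compl p hp, hb_nonneg p]
  rw [hκ.mutualEnergy_map_conv_self hτ]
  calc ∫ p, smoothedKernel κ lam (τ p.1 - τ p.2) ∂(μ.prod μ)
      ≤ ∫ p, (Θ * κ (p.1 - p.2) + (a p + b p)) ∂(μ.prod μ) :=
        integral_mono (hκ.integrable_smoothedKernel_comp (by fun_prop)) (hκ_int.add hab_int)
          pointwise
    _ = _ := by
        rw [integral_add hκ_int hab_int, integral_add ha_int hb_int, integral_const_mul,
          integral_prod _ (hκ.integrable_comp measurable_sub), integral_indicator_const _ hA,
          integral_indicator_const _ hB, smul_eq_mul, smul_eq_mul,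
          mul_comm (mutualEnergy κ lam lam), mul_comm (Θ * κ 0)]
        rfl

end Smoothing

end IsPositiveDefinite

/-- The uniform probability measure on `[0, h]`, for `0 < h`. -/
noncomputable def uniformIcc (h : ℝ) : Measure ℝ := ProbabilityTheory.cond volume (Set.Icc 0 h)

section UniformIcc

variable {h : ℝ}

lemma isProbabilityMeasure_uniformIcc (hh : 0 < h) : IsProbabilityMeasure (uniformIcc h) :=
  ProbabilityTheory.cond_isProbabilityMeasure_of_finite (by simpa) (by simp)

lemma uniformIcc_eq_smul (h : ℝ) :
    uniformIcc h = (ENNReal.ofReal h)⁻¹ • volume.restrict (Set.Icc 0 h) := by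
  rw [uniformIcc, ProbabilityTheory.cond, Real.volume_Icc, sub_zero]

lemma uniformIcc_compl (h : ℝ) : uniformIcc h (Set.Icc 0 h)ᶜ = 0 := by
  simp [uniformIcc_eq_smul]

lemma integral_uniformIcc (hh : 0 < h) (f : ℝ → ℝ) :
    ∫ x, f x ∂uniformIcc h = h⁻¹ * ∫ x in (0 : ℝ)..h, f x := by
  rw [uniformIcc_eq_smul, integral_smul_measure, intervalIntegral.integral_of_le hh.le,
    integral_Icc_eq_integral_Ioc, ENNReal.toReal_inv, ENNReal.toReal_ofReal hh.le, smul_eq_mul]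

lemma conv_uniformIcc_ball_le (hh : 0 < h) (μ : Measure ℝ) [IsProbabilityMeasure μ] (x ρ : ℝ) :
    (μ ∗ uniformIcc h) (Metric.ball x ρ) ≤ ENNReal.ofReal (2 * ρ / h) := by
  have uniform_le (z : ℝ) : uniformIcc h (Metric.ball z ρ) ≤ ENNReal.ofReal (2 * ρ / h) :=
    calc uniformIcc h (Metric.ball z ρ)
        ≤ (ENNReal.ofReal h)⁻¹ * volume (Metric.ball z ρ) := by
          rw [uniformIcc_eq_smul, Measure.smul_apply, smul_eq_mul]
          gcongr
          exact Measure.restrict_le_self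
      _ = ENNReal.ofReal (2 * ρ / h) := by
          rw [Real.volume_ball, ← ENNReal.ofReal_inv_of_pos hh,
            ← ENNReal.ofReal_mul (inv_nonneg.2 hh.le), inv_mul_eq_div]
  have := isProbabilityMeasure_uniformIcc hh
  have translate (y : ℝ) : ∫⁻ u, (Metric.ball x ρ).indicator 1 (y + u) ∂uniformIcc h =
      uniformIcc h (Metric.ball (x - y) ρ) := by
    rw [← lintegral_indicator_one Metric.isOpen_ball.measurableSet]
    refine lintegral_congr fun u => ?_
    have hdist : dist (y + u) x = dist u (x - y) := by
      rw [Real.dist_eq, Real.dist_eq, sub_sub_eq_add_sub, add_comm]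
    simp only [Set.indicator, Metric.mem_ball, hdist, Pi.one_apply]
  rw [← lintegral_indicator_one Metric.isOpen_ball.measurableSet,
    Measure.lintegral_conv (measurable_one.indicator Metric.isOpen_ball.measurableSet)]
  simp only [translate]
  exact (lintegral_mono fun y => uniform_le _).trans_eq (by simp)

end UniformIcc

lemma measureReal_prod_dist_lt_le {X : Type*} [PseudoMetricSpace X] [MeasurableSpace X]
    [OpensMeasurableSpace X] [SecondCountableTopology X] {ν : Measure X} [IsProbabilityMeasure ν]
    {ρ c : ℝ} (hc : 0 ≤ c)
    (hball : ∀ x, ν (Metric.ball x ρ) ≤ ENNReal.ofReal c) :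
    (ν.prod ν).real {p | dist p.1 p.2 < ρ} ≤ c := by
  have hmeas : MeasurableSet {p : X × X | dist p.1 p.2 < ρ} :=
    measurableSet_lt (by fun_prop) measurable_const
  refine ENNReal.toReal_le_of_le_ofReal hc ?_
  rw [Measure.prod_apply hmeas]
  calc ∫⁻ x, ν (Prod.mk x ⁻¹' {p | dist p.1 p.2 < ρ}) ∂ν
      ≤ ∫⁻ _, ENNReal.ofReal c ∂ν := lintegral_mono fun x => (measure_mono fun y
        (hy : dist x y < ρ) => Metric.mem_ball'.2 hy).trans (hball x)
    _ = ENNReal.ofReal c := by simp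

/-- The truncated integral `x ↦ ∫₀ˣ |κ|`. For the kernels considered here the minimal energy of
`[0, R]` is of order `absPrimitive κ R / R`. -/
noncomputable def absPrimitive (κ : ℝ → ℝ) (x : ℝ) : ℝ := ∫ t in (0 : ℝ)..x, |κ t|

lemma absPrimitive_nonneg (κ : ℝ → ℝ) {x : ℝ} (hx : 0 ≤ x) : 0 ≤ absPrimitive κ x :=
  intervalIntegral.integral_nonneg hx fun t _ => abs_nonneg (κ t)

namespace IsPositiveDefinite

variable {κ : ℝ → ℝ}

lemma intervalIntegrable (hκ : IsPositiveDefinite κ) (a b : ℝ) :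
    IntervalIntegrable κ volume a b :=
  (intervalIntegrable_const (c := κ 0)).mono_fun hκ.measurable.aestronglyMeasurable
    (Eventually.of_forall fun t => (hκ.abs_le t).trans (le_abs_self _))

lemma absPrimitive_sub (hκ : IsPositiveDefinite κ) (a b : ℝ) :
    absPrimitive κ b - absPrimitive κ a = ∫ t in a..b, |κ t| :=
  intervalIntegral.integral_interval_sub_left (hκ.intervalIntegrable _ _).abs
    (hκ.intervalIntegrable _ _).abs

lemma monotone_absPrimitive (hκ : IsPositiveDefinite κ) : Monotone (absPrimitive κ) :=
  fun a b hab => sub_nonneg.1 <| (hκ.absPrimitive_sub a b).symm ▸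
    intervalIntegral.integral_nonneg hab fun t _ => abs_nonneg (κ t)

lemma integral_neg_right_eq (hκ : IsPositiveDefinite κ) (x : ℝ) :
    ∫ t in (0 : ℝ)..(-x), κ t = -∫ t in (0 : ℝ)..x, κ t := by
  have := intervalIntegral.integral_comp_neg (f := κ) (a := 0) (b := x)
  simp only [hκ.even, neg_zero] at this
  rw [this, intervalIntegral.integral_symm]

lemma potential_uniformIcc (hκ : IsPositiveDefinite κ) {h : ℝ} (hh : 0 < h) (x : ℝ) :
    potential κ (uniformIcc h) x =
      h⁻¹ * ((∫ t in (0 : ℝ)..x, κ t) + ∫ t in (0 : ℝ)..(h - x), κ t) := by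
  have hint := hκ.intervalIntegrable
  rw [potential, integral_uniformIcc hh, intervalIntegral.integral_comp_sub_left,
    sub_zero, ← intervalIntegral.integral_interval_sub_left (hint 0 x) (hint 0 (x - h)),
    ← neg_sub h x, hκ.integral_neg_right_eq, sub_neg_eq_add]

lemma integral_le_absPrimitive (hκ : IsPositiveDefinite κ) {x : ℝ} (hx : 0 ≤ x) :
    ∫ t in (0 : ℝ)..x, κ t ≤ absPrimitive κ x :=
  intervalIntegral.integral_mono_on hx (hκ.intervalIntegrable _ _) (hκ.intervalIntegrable _ _).abs
    fun t _ => le_abs_self (κ t)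

lemma mutualEnergy_uniformIcc_le (hκ : IsPositiveDefinite κ) {h : ℝ} (hh : 0 < h) :
    mutualEnergy κ (uniformIcc h) (uniformIcc h) ≤ 2 * (absPrimitive κ h / h) := by
  have := isProbabilityMeasure_uniformIcc hh
  have hae : ∀ᵐ x ∂uniformIcc h, potential κ (uniformIcc h) x ≤ 2 * (absPrimitive κ h / h) := by
    filter_upwards [mem_ae_iff.2 (uniformIcc_compl h)] with x ⟨hx0, hxh⟩
    rw [hκ.potential_uniformIcc hh, inv_mul_eq_div, ← mul_div_assoc]
    gcongr
    linarith [hκ.integral_le_absPrimitive hx0, hκ.integral_le_absPrimitive (sub_nonneg.2 hxh),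
      hκ.monotone_absPrimitive hxh, hκ.monotone_absPrimitive (sub_le_self h hx0)]
  exact (integral_mono_ae hκ.integrable_potential (integrable_const _) hae).trans_eq (by simp)

end IsPositiveDefinite

/-- `κ` is almost decreasing at infinity if for every `Θ > 1` there is `l > 1` such that
`κ t' ≤ Θ * κ t` whenever `t` is large and `t' ≥ t / l`. This is monotonicity up to a factor close
to `1`, made robust under contracting distances by a factor close to `1`. -/
def AlmostDecreasing (κ : ℝ → ℝ) : Prop :=
  ∀ Θ : ℝ, 1 < Θ → ∃ l : ℝ, 1 < l ∧ ∀ᶠ t in atTop, ∀ t', t / l ≤ t' → κ t' ≤ Θ * κ t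

lemma AlmostDecreasing.exists_le_two_mul {κ : ℝ → ℝ} (hdec : AlmostDecreasing κ) :
    ∃ x₀ > 0, ∀ x y, x₀ ≤ x → x ≤ y → κ y ≤ 2 * κ x := by
  obtain ⟨l, hl, hev⟩ := hdec 2 one_lt_two
  obtain ⟨x₀, hx₀⟩ := eventually_atTop.1 hev
  refine ⟨max x₀ 1, by positivity, fun x y hx hxy => hx₀ x ((le_max_left _ _).trans hx) y ?_⟩
  have hx_pos : 0 < x := one_pos.trans_le ((le_max_right _ _).trans hx)
  exact (div_le_self hx_pos.le hl.le).trans hxy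

namespace IsPositiveDefinite

variable {κ : ℝ → ℝ} {x₀ : ℝ}

lemma mul_le_absPrimitive (hκ : IsPositiveDefinite κ) (hx₀ : 0 < x₀)
    (hdec : ∀ x y, x₀ ≤ x → x ≤ y → κ y ≤ 2 * κ x) {x : ℝ} (hx : 2 * x₀ ≤ x) :
    x * κ x ≤ 4 * absPrimitive κ x := by
  have hhalf : ∫ _ in (x / 2)..x, κ x / 2 ≤ ∫ t in (x / 2)..x, |κ t| :=
    intervalIntegral.integral_mono_on (by linarith) intervalIntegrable_const
      (hκ.intervalIntegrable _ _).abs fun t ht =>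
        (by linarith [hdec t x (by linarith [ht.1]) ht.2] : κ x / 2 ≤ κ t).trans (le_abs_self _)
  rw [intervalIntegral.integral_const, smul_eq_mul, ← hκ.absPrimitive_sub] at hhalf
  linarith [absPrimitive_nonneg κ (by linarith : 0 ≤ x / 2)]

lemma absPrimitive_le_add (hκ : IsPositiveDefinite κ)
    (hdec : ∀ x y, x₀ ≤ x → x ≤ y → κ y ≤ 2 * κ x) {x y : ℝ} (hx : x₀ ≤ x) (hxy : x ≤ y) :
    absPrimitive κ y ≤ absPrimitive κ x + 2 * ((y - x) * κ x) := by
  have htail : ∫ t in x..y, |κ t| ≤ ∫ _ in x..y, 2 * κ x :=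
    intervalIntegral.integral_mono_on hxy (hκ.intervalIntegrable _ _).abs intervalIntegrable_const
      fun t ht => by
        have ht_nonneg : 0 ≤ κ t := by linarith [hdec t t (hx.trans ht.1) le_rfl]
        rw [abs_of_nonneg ht_nonneg]
        exact hdec x t hx ht.1
  rw [intervalIntegral.integral_const, smul_eq_mul, ← hκ.absPrimitive_sub] at htail
  linarith

lemma absPrimitive_le_mul (hκ : IsPositiveDefinite κ) (hx₀ : 0 < x₀)
    (hdec : ∀ x y, x₀ ≤ x → x ≤ y → κ y ≤ 2 * κ x) {x y : ℝ} (hx : 2 * x₀ ≤ x) (hxy : x ≤ y) :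
    absPrimitive κ y ≤ 8 * (y / x) * absPrimitive κ x := by
  have hx_pos : 0 < x := by linarith
  have hκ_le : κ x ≤ 4 * absPrimitive κ x / x := by
    rw [le_div_iff₀ hx_pos, mul_comm]
    exact hκ.mul_le_absPrimitive hx₀ hdec hx
  calc absPrimitive κ y ≤ absPrimitive κ x + 2 * ((y - x) * κ x) :=
        hκ.absPrimitive_le_add hdec (by linarith) hxy
    _ ≤ absPrimitive κ x + 2 * ((y - x) * (4 * absPrimitive κ x / x)) := by
        gcongr
    _ = 8 * (y / x) * absPrimitive κ x - 7 * absPrimitive κ x := by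
        field_simp
        ring
    _ ≤ 8 * (y / x) * absPrimitive κ x := by linarith [absPrimitive_nonneg κ hx_pos.le]

lemma absPrimitive_sub_le_integral (hκ : IsPositiveDefinite κ) (hx₀ : 0 < x₀)
    (hdec : ∀ x y, x₀ ≤ x → x ≤ y → κ y ≤ 2 * κ x) {x : ℝ} (hx : 0 ≤ x) :
    absPrimitive κ x - 2 * (x₀ * κ 0) ≤ ∫ t in (0 : ℝ)..x, κ t := by
  have hint (a b : ℝ) : IntervalIntegrable (fun t => |κ t| - κ t) volume a b :=
    (hκ.intervalIntegrable a b).abs.sub (hκ.intervalIntegrable a b)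
  have hzero : ∫ t in x₀..(max x x₀), (|κ t| - κ t) = 0 := by
    rw [intervalIntegral.integral_congr (g := fun _ => (0 : ℝ)), intervalIntegral.integral_zero]
    intro t ht
    rw [Set.uIcc_of_le (le_max_right _ _)] at ht
    have ht_nonneg : 0 ≤ κ t := by linarith [hdec t t ht.1 le_rfl]
    simp only [abs_of_nonneg ht_nonneg, sub_self]
  have hbound : ∫ t in (0 : ℝ)..x₀, (|κ t| - κ t) ≤ ∫ _ in (0 : ℝ)..x₀, 2 * κ 0 :=
    intervalIntegral.integral_mono_on hx₀.le (hint _ _) intervalIntegrable_const fun t _ => by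
      linarith [hκ.abs_le t, neg_abs_le (κ t)]
  have hle : absPrimitive κ x - ∫ t in (0 : ℝ)..x, κ t ≤ 2 * (x₀ * κ 0) :=
    calc absPrimitive κ x - ∫ t in (0 : ℝ)..x, κ t
        = ∫ t in (0 : ℝ)..x, (|κ t| - κ t) :=
          (intervalIntegral.integral_sub (hκ.intervalIntegrable 0 x).abs
            (hκ.intervalIntegrable 0 x)).symm
      _ ≤ ∫ t in (0 : ℝ)..(max x x₀), (|κ t| - κ t) :=
          intervalIntegral.integral_mono_interval le_rfl hx (le_max_left _ _)
            (Eventually.of_forall fun t => sub_nonneg.2 (le_abs_self (κ t))) (hint _ _)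
      _ = ∫ t in (0 : ℝ)..x₀, (|κ t| - κ t) := by
          rw [← intervalIntegral.integral_add_adjacent_intervals (hint 0 x₀) (hint x₀ _), hzero,
            add_zero]
      _ ≤ ∫ _ in (0 : ℝ)..x₀, 2 * κ 0 := hbound
      _ = 2 * (x₀ * κ 0) := by
          rw [intervalIntegral.integral_const, smul_eq_mul]
          ring
  linarith

lemma le_potential_uniformIcc (hκ : IsPositiveDefinite κ) (hx₀ : 0 < x₀)
    (hdec : ∀ x y, x₀ ≤ x → x ≤ y → κ y ≤ 2 * κ x) {x R : ℝ} (hR : 0 < R)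
    (hx : x ∈ Set.Icc 0 R) :
    (absPrimitive κ (R / 2) - 4 * (x₀ * κ 0)) / R ≤ potential κ (uniformIcc R) x := by
  have hRx : 0 ≤ R - x := sub_nonneg.2 hx.2
  have hsplit : absPrimitive κ (R / 2) ≤ absPrimitive κ x + absPrimitive κ (R - x) := by
    rcases le_total x (R / 2) with h | h
    · linarith [hκ.monotone_absPrimitive (by linarith : R / 2 ≤ R - x), absPrimitive_nonneg κ hx.1]
    · linarith [hκ.monotone_absPrimitive h, absPrimitive_nonneg κ hRx]
  rw [hκ.potential_uniformIcc hR, inv_mul_eq_div]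
  gcongr
  linarith [hκ.absPrimitive_sub_le_integral hx₀ hdec hx.1,
    hκ.absPrimitive_sub_le_integral hx₀ hdec hRx]

lemma le_mutualEnergy_uniformIcc (hκ : IsPositiveDefinite κ) (hx₀ : 0 < x₀)
    (hdec : ∀ x y, x₀ ≤ x → x ≤ y → κ y ≤ 2 * κ x) {R : ℝ} (hR : 0 < R) {μ : Measure ℝ}
    [IsProbabilityMeasure μ] (hμ : μ (Set.Icc 0 R)ᶜ = 0) :
    (absPrimitive κ (R / 2) - 4 * (x₀ * κ 0)) / R ≤ mutualEnergy κ μ (uniformIcc R) := by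
  have := isProbabilityMeasure_uniformIcc hR
  calc (absPrimitive κ (R / 2) - 4 * (x₀ * κ 0)) / R
      = ∫ _, (absPrimitive κ (R / 2) - 4 * (x₀ * κ 0)) / R ∂μ := by simp
    _ ≤ mutualEnergy κ μ (uniformIcc R) := by
        refine integral_mono_ae (integrable_const _) hκ.integrable_potential ?_
        filter_upwards [mem_ae_iff.2 hμ] with x hx
        exact hκ.le_potential_uniformIcc hx₀ hdec hR hx

/- By Cauchy–Schwarz, a lower bound for the mutual energy with the uniform measure and an upper
bound for the energy of the uniform measure bound every energy from below. -/
lemma eventually_absPrimitive_div_le_mutualEnergy (hκ : IsPositiveDefinite κ)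
    (hdec : AlmostDecreasing κ) (hΦ : Tendsto (absPrimitive κ) atTop atTop) :
    ∀ᶠ R in atTop, ∀ μ : Measure ℝ, IsProbabilityMeasure μ → μ (Set.Icc 0 R)ᶜ = 0 →
      absPrimitive κ R / R ≤ 2048 * mutualEnergy κ μ μ := by
  obtain ⟨x₀, hx₀, hdec⟩ := hdec.exists_le_two_mul
  filter_upwards [eventually_ge_atTop (4 * x₀), eventually_gt_atTop 0,
    hΦ.eventually_ge_atTop (32 * (4 * (x₀ * κ 0))), hΦ.eventually_gt_atTop 0]
    with R hRx₀ hR hΦ_large hΦ_pos μ _ hμ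
  have := isProbabilityMeasure_uniformIcc hR
  set m := absPrimitive κ R / R with hm
  have hm_pos : 0 < m := div_pos hΦ_pos hR
  have hdouble := hκ.absPrimitive_le_mul hx₀ hdec (by linarith : 2 * x₀ ≤ R / 2)
    (half_le_self hR.le)
  rw [div_div_cancel₀ hR.ne'] at hdouble
  have hmutual : m / 32 ≤ mutualEnergy κ μ (uniformIcc R) := by
    refine le_trans ?_ (hκ.le_mutualEnergy_uniformIcc hx₀ hdec hR hμ)
    rw [hm, div_right_comm]
    gcongr
    linarith
  have hchain : (m / 32) ^ 2 ≤ mutualEnergy κ μ μ * (2 * m) :=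
    calc (m / 32) ^ 2 ≤ mutualEnergy κ μ (uniformIcc R) ^ 2 := by gcongr
      _ ≤ mutualEnergy κ μ μ * mutualEnergy κ (uniformIcc R) (uniformIcc R) :=
        hκ.sq_mutualEnergy_le
      _ ≤ mutualEnergy κ μ μ * (2 * m) :=
        mul_le_mul_of_nonneg_left (hκ.mutualEnergy_uniformIcc_le hR) hκ.mutualEnergy_self_nonneg
  refine le_of_mul_le_mul_right ?_ hm_pos
  linarith

end IsPositiveDefinite

/-- The map sending the `j`-th cell `[j w, (j + 1) w)` to the point `(j + 1) r`. -/
noncomputable def cellMap (w r x : ℝ) : ℝ := (⌊x / w⌋ + 1) * r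

section CellMap

variable {l r x y : ℝ}

lemma measurable_cellMap (w r : ℝ) : Measurable (cellMap w r) := by
  unfold cellMap
  fun_prop

lemma abs_sub_cellMap_sub_le (hl : 0 < l) (hr : 0 < r) (x y : ℝ) :
    |(x - y) / l - (cellMap (l * r) r x - cellMap (l * r) r y)| ≤ r := by
  have hfract : |Int.fract (x / (l * r)) - Int.fract (y / (l * r))| ≤ 1 := by
    rw [abs_le]
    constructor <;> linarith [Int.fract_nonneg (x / (l * r)), Int.fract_lt_one (x / (l * r)),
      Int.fract_nonneg (y / (l * r)), Int.fract_lt_one (y / (l * r))]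
  have hdiff : (x - y) / l - (cellMap (l * r) r x - cellMap (l * r) r y) =
      (Int.fract (x / (l * r)) - Int.fract (y / (l * r))) * r := by
    simp only [cellMap, Int.fract]
    field_simp
    ring
  rw [hdiff, abs_mul, abs_of_pos hr]
  exact mul_le_of_le_one_left hr.le hfract

lemma abs_sub_div_le_abs_cellMap_sub_add {l' z : ℝ} (hl : 0 < l) (hll' : l < l') (hr : 0 < r)
    (hz : |z| ≤ r) (hxy : 2 / (1 / l - 1 / l') * r ≤ |x - y|) :
    |x - y| / l' ≤ |cellMap (l * r) r x - cellMap (l * r) r y + z| := by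
  have hgap : 0 < 1 / l - 1 / l' := sub_pos.2 (one_div_lt_one_div_of_lt hl hll')
  have hfar : 2 * r ≤ |x - y| * (1 / l - 1 / l') := by
    rwa [div_mul_eq_mul_div, div_le_iff₀ hgap] at hxy
  have hscale : |x - y| / l = |(x - y) / l| := by rw [abs_div, abs_of_pos hl]
  have htriangle := abs_sub_abs_le_abs_sub ((x - y) / l)
    ((x - y) / l - (cellMap (l * r) r x - cellMap (l * r) r y) - z)
  have hcancel : (x - y) / l - ((x - y) / l - (cellMap (l * r) r x - cellMap (l * r) r y) - z) =
      cellMap (l * r) r x - cellMap (l * r) r y + z := by ring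
  rw [hcancel, ← hscale] at htriangle
  have herror := (abs_sub ((x - y) / l - (cellMap (l * r) r x - cellMap (l * r) r y)) z).trans
    (add_le_add (abs_sub_cellMap_sub_le hl hr x y) hz)
  rw [mul_sub, mul_one_div, mul_one_div] at hfar
  linarith

lemma cellMap_add_mem_condensedSet {s u R Y : ℝ} (hlr : 0 < l * r)
    (hY : Y / (l * r) + 1 < ⌊R / r⌋₊) (hx : x ∈ Set.Icc 0 Y) (hu : u ∈ Set.Icc 0 s) :
    cellMap (l * r) r x + u ∈ condensedSet s r R := by
  obtain ⟨j, hj⟩ := Int.eq_ofNat_of_zero_le (Int.floor_nonneg.2 (div_nonneg hx.1 hlr.le))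
  have hj_lt : ((j + 1 : ℕ) : ℝ) < ⌊R / r⌋₊ := by
    have hfloor : (⌊x / (l * r)⌋ : ℝ) ≤ Y / (l * r) :=
      (Int.floor_le _).trans (div_le_div_of_nonneg_right hx.2 hlr.le)
    rw [hj] at hfloor
    push_cast at hfloor ⊢
    linarith
  refine Set.mem_biUnion (x := j + 1) ⟨by omega, by exact_mod_cast hj_lt⟩ ?_
  simp only [cellMap, hj]
  push_cast
  constructor <;> linarith [hu.1, hu.2]

end CellMap

lemma measurableSet_condensedSet (s r R : ℝ) : MeasurableSet (condensedSet s r R) :=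
  MeasurableSet.biUnion (Set.to_countable _) fun _ _ => measurableSet_Icc

lemma condensedSet_subset_Icc {s r R : ℝ} (hr : 0 < r) (hR : 0 ≤ R) (hsr : s ≤ r) :
    condensedSet s r R ⊆ Set.Icc 0 R := by
  refine Set.iUnion₂_subset fun i hi x hx => ⟨le_trans (by positivity) hx.1, ?_⟩
  have hi_le : ((i + 1 : ℕ) : ℝ) ≤ R / r :=
    (Nat.cast_le.2 hi.2).trans (Nat.floor_le (div_nonneg hR hr.le))
  rw [le_div_iff₀ hr] at hi_le
  push_cast at hi_le
  linarith [hx.2]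

lemma map_conv_compl_eq_zero_of_add_mem {Ω G : Type*} [MeasurableSpace Ω] [AddMonoid G]
    [MeasurableSpace G] [MeasurableAdd₂ G] {μ : Measure Ω} {ν : Measure G} [SFinite μ] [SFinite ν]
    {τ : Ω → G} (hτ : Measurable τ) {A : Set Ω} {B C : Set G} (hA : μ Aᶜ = 0) (hB : ν Bᶜ = 0)
    (hC : MeasurableSet C) (hadd : ∀ a ∈ A, ∀ b ∈ B, τ a + b ∈ C) :
    ((μ.map τ) ∗ ν) Cᶜ = 0 := by
  have hprod : (μ.map τ).prod ν = (μ.prod ν).map (Prod.map τ id) := by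
    rw [← Measure.map_prod_map _ _ hτ measurable_id, Measure.map_id]
  rw [Measure.conv, hprod, Measure.map_apply measurable_add hC.compl,
    Measure.map_apply (hτ.prodMap measurable_id) (measurable_add hC.compl)]
  have hA' : ∀ᵐ p ∂μ.prod ν, p.1 ∈ A := Measure.quasiMeasurePreserving_fst.ae (mem_ae_iff.2 hA)
  have hB' : ∀ᵐ p ∂μ.prod ν, p.2 ∈ B := Measure.quasiMeasurePreserving_snd.ae (mem_ae_iff.2 hB)
  filter_upwards [hA', hB'] with p hp₁ hp₂
  exact hadd p.1 hp₁ p.2 hp₂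

lemma eventually_mul_add_one_lt_floor {q : ℝ} (hq : q < 1) :
    ∀ᶠ x : ℝ in atTop, q * x + 1 < ⌊x⌋₊ := by
  filter_upwards [eventually_gt_atTop (2 / (1 - q))] with x hx
  rw [div_lt_iff₀ (sub_pos.2 hq)] at hx
  linarith [Nat.lt_floor_add_one x]

lemma tendsto_div_atTop_of_isLittleO {r : ℝ → ℝ} (hr : ∀ᶠ R in atTop, 0 < r R)
    (hro : r =o[atTop] fun R : ℝ => R) : Tendsto (fun R => R / r R) atTop atTop := by
  simp_rw [← inv_div (r _)]
  refine Tendsto.inv_tendsto_nhdsGT_zero (tendsto_nhdsWithin_iff.2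
    ⟨hro.tendsto_div_nhds_zero, ?_⟩)
  filter_upwards [hr, eventually_gt_atTop 0] with R hr hR using div_pos hr hR

namespace IsPositiveDefinite

variable {κ : ℝ → ℝ}

lemma apply_abs (hκ : IsPositiveDefinite κ) (t : ℝ) : κ |t| = κ t := by
  rcases abs_choice t with h | h <;> simp only [h, hκ.even]

section Condensation

variable {l l' r s T Θ : ℝ}

lemma smoothedKernel_cellMap_le (hκ : IsPositiveDefinite κ) (hl : 0 < l) (hll' : l < l')
    (hr : 0 < r) (hs : 0 < s) (hsr : s ≤ r)
    (hfar : ∀ t, T ≤ t → ∀ t', t / l' ≤ t' → κ t' ≤ Θ * κ t)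
    (hT : T ≤ 2 / (1 / l - 1 / l') * r) {x y : ℝ}
    (hxy : 2 / (1 / l - 1 / l') * r ≤ |x - y|) :
    smoothedKernel κ (uniformIcc s) (cellMap (l * r) r x - cellMap (l * r) r y) ≤
      Θ * κ (x - y) := by
  have := isProbabilityMeasure_uniformIcc hs
  refine hκ.smoothedKernel_le_of_forall (uniformIcc_compl s) fun u hu v hv => ?_
  have huv : |u - v| ≤ r := by
    rw [_root_.abs_le]
    constructor <;> linarith [hu.1, hu.2, hv.1, hv.2]
  rw [← hκ.apply_abs, ← hκ.apply_abs (x - y)]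
  exact hfar _ (hT.trans hxy) _ (abs_sub_div_le_abs_cellMap_sub_add hl hll' hr huv hxy)

lemma mutualEnergy_map_cellMap_conv_le (hκ : IsPositiveDefinite κ) (hl : 1 < l) (hll' : l < l')
    (hr : 0 < r) (hs : 0 < s) (hsr : s ≤ r) (hΘ : 1 < Θ) (hT_nonneg : 0 ≤ T)
    (hfar : ∀ t, T ≤ t → ∀ t', t / l' ≤ t' → κ t' ≤ Θ * κ t)
    (hT : T ≤ 2 / (1 / l - 1 / l') * r) {h : ℝ} (hh : 0 < h) {ν : Measure ℝ}
    [IsProbabilityMeasure ν] (hball : ∀ x ρ, ν (Metric.ball x ρ) ≤ ENNReal.ofReal (2 * ρ / h)) :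
    mutualEnergy κ ((ν.map (cellMap (l * r) r)) ∗ uniformIcc s)
        ((ν.map (cellMap (l * r) r)) ∗ uniformIcc s) ≤
      Θ * mutualEnergy κ ν ν + (2 * (absPrimitive κ s / s) *
        (2 * (2 / (1 / l - 1 / l') * r) / h) + Θ * κ 0 * (2 * T / h)) := by
  have := isProbabilityMeasure_uniformIcc hs
  set M := 2 / (1 / l - 1 / l')
  have hM_nonneg : 0 ≤ M * r := hT_nonneg.trans hT
  have hκ_nonneg {t : ℝ} (ht : T ≤ t) : 0 ≤ κ t := by
    have := hfar t ht t (div_le_self (hT_nonneg.trans ht) (hl.trans hll').le)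
    nlinarith
  have hmeas (ρ : ℝ) : MeasurableSet {p : ℝ × ℝ | dist p.1 p.2 < ρ} :=
    measurableSet_lt (by fun_prop) measurable_const
  have hprod {ρ : ℝ} (hρ : 0 ≤ ρ) : (ν.prod ν).real {p | dist p.1 p.2 < ρ} ≤ 2 * ρ / h :=
    measureReal_prod_dist_lt_le (by positivity) fun x => hball x ρ
  refine (hκ.mutualEnergy_map_conv_le (measurable_cellMap _ _) (hmeas (M * r)) (hmeas T)
    (zero_le_one.trans hΘ.le) (fun p hp => ?_) fun p hp => ?_).trans ?_
  · exact hκ.smoothedKernel_cellMap_le (one_pos.trans hl) hll' hr hs hsr hfar hT (not_lt.1 hp)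
  · rw [← hκ.apply_abs]
    exact hκ_nonneg (not_lt.1 hp)
  · have hs_nonneg := absPrimitive_nonneg κ hs.le
    have := hκ.zero_nonneg
    gcongr
    exacts [hκ.mutualEnergy_uniformIcc_le hs, hprod hM_nonneg, hprod hT_nonneg]

lemma exists_condensedSet_mutualEnergy_le (hκ : IsPositiveDefinite κ) (hl : 1 < l) (hll' : l < l')
    (hr : 0 < r) (hs : 0 < s) (hsr : s ≤ r) (hΘ : 1 < Θ) (hT_nonneg : 0 ≤ T)
    (hfar : ∀ t, T ≤ t → ∀ t', t / l' ≤ t' → κ t' ≤ Θ * κ t)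
    (hT : T ≤ 2 / (1 / l - 1 / l') * r) {R h : ℝ} (hh : 0 < h)
    (hfloor : (R + h) / (l * r) + 1 < ⌊R / r⌋₊) {μ : Measure ℝ} [IsProbabilityMeasure μ]
    (hμ : μ (Set.Icc 0 R)ᶜ = 0) :
    ∃ μ' : Measure ℝ, IsProbabilityMeasure μ' ∧ μ' (condensedSet s r R)ᶜ = 0 ∧
      mutualEnergy κ μ' μ' ≤ Θ * mutualEnergy κ μ μ + (2 * (absPrimitive κ s / s) *
        (2 * (2 / (1 / l - 1 / l') * r) / h) + Θ * κ 0 * (2 * T / h)) := by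
  have := isProbabilityMeasure_uniformIcc hh
  have := isProbabilityMeasure_uniformIcc hs
  have hτ := measurable_cellMap (l * r) r
  have hlr : 0 < l * r := by positivity
  have hμ_conv : (μ ∗ uniformIcc h) (Set.Icc 0 (R + h))ᶜ = 0 := by
    simpa only [Measure.map_id] using map_conv_compl_eq_zero_of_add_mem measurable_id hμ
      (uniformIcc_compl h) measurableSet_Icc fun a ha b hb =>
        ⟨add_nonneg ha.1 hb.1, add_le_add ha.2 hb.2⟩
  have := Measure.isProbabilityMeasure_map (μ := μ ∗ uniformIcc h) hτ.aemeasurable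
  refine ⟨((μ ∗ uniformIcc h).map (cellMap (l * r) r)) ∗ uniformIcc s, inferInstance, ?_, ?_⟩
  · exact map_conv_compl_eq_zero_of_add_mem hτ hμ_conv (uniformIcc_compl s)
      (measurableSet_condensedSet s r R) fun x hx u hu =>
        cellMap_add_mem_condensedSet hlr hfloor hx hu
  · refine (hκ.mutualEnergy_map_cellMap_conv_le hl hll' hr hs hsr hΘ hT_nonneg hfar hT hh
      (conv_uniformIcc_ball_le hh μ)).trans ?_
    gcongr
    exact hκ.mutualEnergy_conv_le

end Condensation

lemma isLittleO_id_of_isLittleO_absPrimitive (hκ : IsPositiveDefinite κ)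
    (hdec : AlmostDecreasing κ) (hΦ : Tendsto (absPrimitive κ) atTop atTop) {r s : ℝ → ℝ}
    (hs : Tendsto s atTop atTop) (hsr : ∀ᶠ R in atTop, s R ≤ r R)
    (hrs : (fun R => r R * (absPrimitive κ (s R) / s R)) =o[atTop] absPrimitive κ) :
    r =o[atTop] (fun R : ℝ => R) := by
  obtain ⟨x₀, hx₀, hdec⟩ := hdec.exists_le_two_mul
  refine IsLittleO.of_bound fun c hc => ?_
  filter_upwards [hrs.bound (lt_min one_half_pos (by positivity : 0 < c / 8)), hsr,
    eventually_gt_atTop 0, hs.eventually_ge_atTop (2 * x₀), (hΦ.comp hs).eventually_gt_atTop 0]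
    with R hbound hsr hR hs hΦ_pos
  have hs_pos : 0 < s R := by linarith
  have hr_pos : 0 < r R := hs_pos.trans_le hsr
  change 0 < absPrimitive κ (s R) at hΦ_pos
  rw [Real.norm_of_nonneg (by positivity), Real.norm_of_nonneg (absPrimitive_nonneg κ hR.le)]
    at hbound
  rw [Real.norm_of_nonneg hr_pos.le, Real.norm_of_nonneg hR.le]
  have hmul_le {b : ℝ} (hb : r R * (absPrimitive κ (s R) / s R) ≤ b * absPrimitive κ (s R)) :
      r R ≤ b * s R := by
    rwa [← mul_div_assoc, div_le_iff₀ hs_pos, mul_right_comm, mul_le_mul_iff_left₀ hΦ_pos] at hb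
  rcases le_total (s R) R with hsR | hRs
  · have hle : r R ≤ c * (R / s R) * s R := hmul_le <|
      calc r R * (absPrimitive κ (s R) / s R) ≤ c / 8 * absPrimitive κ R :=
            hbound.trans (by gcongr; exacts [absPrimitive_nonneg κ hR.le, min_le_right _ _])
        _ ≤ c / 8 * (8 * (R / s R) * absPrimitive κ (s R)) := by
            gcongr
            exact hκ.absPrimitive_le_mul hx₀ hdec hs hsR
        _ = c * (R / s R) * absPrimitive κ (s R) := by ring
    rwa [mul_assoc, div_mul_cancel₀ _ hs_pos.ne'] at hle
  · have hle : r R ≤ 1 / 2 * s R := hmul_le <|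
      hbound.trans (mul_le_mul (min_le_left _ _) (hκ.monotone_absPrimitive hRs)
        (absPrimitive_nonneg κ hR.le) one_half_pos.le)
    linarith

lemma eventually_exists_condensedSet_mutualEnergy_le (hκ : IsPositiveDefinite κ)
    (hdec : AlmostDecreasing κ) (hΦ : Tendsto (absPrimitive κ) atTop atTop) {r s : ℝ → ℝ}
    (hs : Tendsto s atTop atTop) (hsr : ∀ᶠ R in atTop, s R ≤ r R)
    (hrs : (fun R => r R * (absPrimitive κ (s R) / s R)) =o[atTop] absPrimitive κ) {η : ℝ}
    (hη : 0 < η) :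
    ∀ᶠ R in atTop, ∀ μ : Measure ℝ, IsProbabilityMeasure μ → μ (Set.Icc 0 R)ᶜ = 0 →
      ∃ μ' : Measure ℝ, IsProbabilityMeasure μ' ∧ μ' (condensedSet (s R) (r R) R)ᶜ = 0 ∧
        mutualEnergy κ μ' μ' ≤ (1 + η) * mutualEnergy κ μ μ := by
  have hro := hκ.isLittleO_id_of_isLittleO_absPrimitive hdec hΦ hs hsr hrs
  have hΘ : 1 < 1 + η / 2 := by linarith
  obtain ⟨l', hl', hfar⟩ := hdec _ hΘ
  obtain ⟨T, hT_nonneg, hfar⟩ : ∃ T ≥ 0, ∀ t, T ≤ t → ∀ t', t / l' ≤ t' →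
      κ t' ≤ (1 + η / 2) * κ t := (atTop_basis' 0).eventually_iff.1 hfar
  obtain ⟨l, hl, hll'⟩ := exists_between hl'
  obtain ⟨ε, hε, hεl⟩ : ∃ ε > 0, 1 + ε < l := ⟨(l - 1) / 2, by linarith, by linarith⟩
  set M := 2 / (1 / l - 1 / l')
  have hM : 0 < M := div_pos two_pos (sub_pos.2 (one_div_lt_one_div_of_lt (by linarith) hll'))
  have herror : (fun R => 4 * M * (r R * (absPrimitive κ (s R) / s R)) +
      2 * (1 + η / 2) * κ 0 * T) =o[atTop] absPrimitive κ :=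
    (hrs.const_mul_left _).add (isLittleO_const_left.2 (Or.inr (tendsto_norm_atTop_atTop.comp hΦ)))
  have hr : Tendsto r atTop atTop := tendsto_atTop_mono' _ hsr hs
  filter_upwards [hκ.eventually_absPrimitive_div_le_mutualEnergy hdec hΦ, hsr,
    herror.bound (by positivity : 0 < η * ε / 4096), eventually_gt_atTop 0,
    hs.eventually_gt_atTop 0, hr.eventually_ge_atTop (T / M),
    (tendsto_div_atTop_of_isLittleO (hr.eventually_gt_atTop 0) hro).eventually
      (eventually_mul_add_one_lt_floor ((div_lt_one (by linarith)).2 hεl))]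
    with R hlower hsr herror hR hs hTr hfloor μ _ hμ
  rw [div_le_iff₀' hM] at hTr
  rw [Real.norm_of_nonneg (absPrimitive_nonneg κ hR.le)] at herror
  have hfloor : (R + ε * R) / (l * r R) + 1 < ⌊R / r R⌋₊ := by
    rwa [← one_add_mul, mul_div_mul_comm]
  obtain ⟨μ', hμ', hμ'_supp, hμ'_le⟩ := hκ.exists_condensedSet_mutualEnergy_le hl hll'
    (hs.trans_le hsr) hs hsr hΘ hT_nonneg hfar hTr (mul_pos hε hR) hfloor hμ
  refine ⟨μ', hμ', hμ'_supp, hμ'_le.trans ?_⟩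
  have herror_le : 2 * (absPrimitive κ (s R) / s R) * (2 * (M * r R) / (ε * R)) +
      (1 + η / 2) * κ 0 * (2 * T / (ε * R)) ≤ η / 2 * mutualEnergy κ μ μ :=
    calc _ = (4 * M * (r R * (absPrimitive κ (s R) / s R)) + 2 * (1 + η / 2) * κ 0 * T) /
          (ε * R) := by ring
      _ ≤ η * ε / 4096 * absPrimitive κ R / (ε * R) := by
        gcongr
        exact (le_abs_self _).trans herror
      _ = η / 4096 * (absPrimitive κ R / R) := by field_simp
      _ ≤ η / 4096 * (2048 * mutualEnergy κ μ μ) := by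
        gcongr
        exact hlower μ ‹_› hμ
      _ = η / 2 * mutualEnergy κ μ μ := by ring
  linarith

lemma tendsto_minEnergy_condensedSet_div (hκ : IsPositiveDefinite κ)
    (hdec : AlmostDecreasing κ) (hΦ : Tendsto (absPrimitive κ) atTop atTop) {r s : ℝ → ℝ}
    (hs : Tendsto s atTop atTop) (hsr : ∀ᶠ R in atTop, s R ≤ r R)
    (hrs : (fun R => r R * (absPrimitive κ (s R) / s R)) =o[atTop] absPrimitive κ) :
    Tendsto (fun R => minEnergy κ (condensedSet (s R) (r R) R) / minEnergy κ (Set.Icc 0 R)) atTop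
      (nhds 1) := by
  have hr : ∀ᶠ R in atTop, 0 < r R := by
    filter_upwards [hs.eventually_gt_atTop 0, hsr] with R hs hsr using hs.trans_le hsr
  have bounds {η : ℝ} (hη : 0 < η) : ∀ᶠ R in atTop,
      minEnergy κ (condensedSet (s R) (r R) R) / minEnergy κ (Set.Icc 0 R) ∈ Set.Icc 1 (1 + η) := by
    filter_upwards [hκ.eventually_exists_condensedSet_mutualEnergy_le hdec hΦ hs hsr hrs hη,
      hκ.eventually_absPrimitive_div_le_mutualEnergy hdec hΦ, hsr, hr, eventually_gt_atTop 0,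
      hΦ.eventually_gt_atTop 0] with R hcond hlower hsr hr hR hΦ_pos
    have hunif := isProbabilityMeasure_uniformIcc hR
    have hIcc : 0 < minEnergy κ (Set.Icc 0 R) :=
      (by positivity : 0 < absPrimitive κ R / R / 2048).trans_le <|
        le_minEnergy ⟨_, hunif, uniformIcc_compl R⟩ fun μ hμ hμ_supp => by
          linarith [hlower μ hμ hμ_supp]
    obtain ⟨ν, hν, hν_supp, -⟩ := hcond _ hunif (uniformIcc_compl R)
    rw [Set.mem_Icc, one_le_div hIcc, div_le_iff₀ hIcc, ← div_le_iff₀' (by positivity)]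
    constructor
    · refine le_minEnergy ⟨ν, hν, hν_supp⟩ fun μ _ hμ => hκ.minEnergy_le ?_
      exact measure_mono_null
        (Set.compl_subset_compl.2 (condensedSet_subset_Icc hr hR.le hsr)) hμ
    · refine le_minEnergy ⟨_, hunif, uniformIcc_compl R⟩ fun μ hμ hμ_supp => ?_
      obtain ⟨μ', _, hμ'_supp, hμ'_le⟩ := hcond μ hμ hμ_supp
      rw [div_le_iff₀' (by positivity)]
      exact (hκ.minEnergy_le hμ'_supp).trans hμ'_le
  refine Metric.tendsto_nhds.2 fun η hη => ?_
  filter_upwards [bounds (half_pos hη)] with R hR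
  rw [Real.dist_eq, abs_lt]
  constructor <;> linarith [hR.1, hR.2]

end IsPositiveDefinite

lemma le_of_forall_apply_two_mul_le {F : ℝ → ℝ} {a C : ℝ} (ha : 0 < a)
    (hF : ∀ x, a ≤ x → F (2 * x) ≤ F x) (hC : ∀ x, a ≤ x → x ≤ 2 * a → F x ≤ C) {x : ℝ}
    (hx : a ≤ x) : F x ≤ C := by
  have dyadic (n : ℕ) : ∀ x, a ≤ x → x ≤ 2 ^ n * (2 * a) → F x ≤ C := by
    induction n with
    | zero => simpa using hC
    | succ n ih =>
      intro x hx hxn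
      rcases le_total x (2 * a) with hx2 | hx2
      · exact hC x hx hx2
      · rw [← mul_div_cancel₀ x two_ne_zero]
        exact (hF (x / 2) (by linarith)).trans
          (ih (x / 2) (by linarith) (by rw [pow_succ] at hxn; linarith))
  obtain ⟨n, hn⟩ := pow_unbounded_of_one_lt (x / (2 * a)) (one_lt_two (α := ℝ))
  exact dyadic n x hx ((div_lt_iff₀ (by positivity)).1 hn).le

lemma AlmostDecreasing.tendsto_mul_self_atTop {κ : ℝ → ℝ} (hdec : AlmostDecreasing κ)
    (hpos : ∀ᶠ x in atTop, 0 < κ x) {q : ℝ} (hq : 1 < q)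
    (hgrowth : ∀ᶠ x in atTop, q * (x * κ x) ≤ 2 * x * κ (2 * x)) :
    Tendsto (fun x => x * κ x) atTop atTop := by
  obtain ⟨x₀, hx₀, hdec⟩ := hdec.exists_le_two_mul
  obtain ⟨a, ha⟩ := eventually_atTop.1 (hgrowth.and (hpos.and (eventually_ge_atTop x₀)))
  obtain ⟨-, -, hax⟩ := ha a le_rfl
  have ha_pos : 0 < a := hx₀.trans_le hax
  set δ := Real.logb 2 q
  have hδ : 0 < δ := Real.logb_pos one_lt_two hq
  have hκ2a := (ha (2 * a) (by linarith)).2.1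
  have hlower : ∀ᶠ x in atTop, a * (κ (2 * a) / 2) / (2 * a) ^ δ * x ^ δ ≤ x * κ x := by
    filter_upwards [eventually_ge_atTop a] with x hx
    rw [← le_div_iff₀ (Real.rpow_pos_of_pos (ha_pos.trans_le hx) _), ← neg_le_neg_iff]
    refine le_of_forall_apply_two_mul_le (F := fun x => -(x * κ x / x ^ δ)) ha_pos
      (fun y hy => ?_) (fun y hy hy2 => ?_) hx
    · have hy_pos : 0 < y := ha_pos.trans_le hy
      rw [neg_le_neg_iff, Real.mul_rpow zero_le_two hy_pos.le,
        Real.rpow_logb two_pos (by norm_num) (by linarith),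
        ← mul_div_mul_left _ _ (by linarith : q ≠ 0)]
      exact div_le_div_of_nonneg_right (ha y hy).1 (by positivity)
    · have hy_pos : 0 < y := ha_pos.trans_le hy
      have hκ_pos := (ha y hy).2.1
      rw [neg_le_neg_iff]
      gcongr
      linarith [hdec y (2 * a) (hax.trans hy) hy2]
  exact tendsto_atTop_mono' _ hlower ((tendsto_rpow_atTop hδ).const_mul_atTop (by positivity))

namespace IsPositiveDefinite

variable {κ : ℝ → ℝ}

lemma mul_self_isBigO_absPrimitive (hκ : IsPositiveDefinite κ) (hdec : AlmostDecreasing κ) :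
    (fun x => x * κ x) =O[atTop] absPrimitive κ := by
  obtain ⟨x₀, hx₀, hdec⟩ := hdec.exists_le_two_mul
  refine IsBigO.of_bound 4 ?_
  filter_upwards [eventually_ge_atTop (2 * x₀)] with x hx
  have hκx : 0 ≤ κ x := by linarith [hdec x x (by linarith) le_rfl]
  have hx_pos : 0 < x := by linarith
  rw [Real.norm_of_nonneg (by positivity), Real.norm_of_nonneg (absPrimitive_nonneg κ hx_pos.le)]
  exact hκ.mul_le_absPrimitive hx₀ hdec hx

lemma tendsto_absPrimitive (hκ : IsPositiveDefinite κ) (hdec : AlmostDecreasing κ)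
    (h : Tendsto (fun x => x * κ x) atTop atTop) : Tendsto (absPrimitive κ) atTop atTop := by
  obtain ⟨x₀, hx₀, hdec⟩ := hdec.exists_le_two_mul
  refine tendsto_atTop_mono' _ ?_ (h.atTop_div_const four_pos)
  filter_upwards [eventually_ge_atTop (2 * x₀)] with x hx
  exact (div_le_iff₀' four_pos).2 (hκ.mul_le_absPrimitive hx₀ hdec hx)

lemma absPrimitive_isBigO_mul_self (hκ : IsPositiveDefinite κ) (hdec : AlmostDecreasing κ)
    (hpos : ∀ᶠ x in atTop, 0 < κ x) {q : ℝ} (hq : 1 < q)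
    (hgrowth : ∀ᶠ x in atTop, q * (x * κ x) ≤ 2 * x * κ (2 * x)) :
    absPrimitive κ =O[atTop] fun x => x * κ x := by
  have hφ := hdec.tendsto_mul_self_atTop hpos hq hgrowth
  obtain ⟨x₀, hx₀, hdec⟩ := hdec.exists_le_two_mul
  obtain ⟨a, ha⟩ := eventually_atTop.1 (hgrowth.and (hpos.and (eventually_ge_atTop x₀)))
  have hax : x₀ ≤ a := (ha a le_rfl).2.2
  set A := 2 / (q - 1)
  have hA : 0 < A := div_pos two_pos (sub_pos.2 hq)
  have hAq : A * q = A + 2 := by rw [← div_mul_cancel₀ 2 (sub_pos.2 hq).ne']; ring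
  have hupper {x : ℝ} (hx : a ≤ x) : absPrimitive κ x - A * (x * κ x) ≤ absPrimitive κ (2 * a) := by
    refine le_of_forall_apply_two_mul_le (F := fun x => absPrimitive κ x - A * (x * κ x))
      (hx₀.trans_le hax) (fun y hy => ?_) (fun y hy hy2 => ?_) hx
    · have : 0 < y := hx₀.trans_le (hax.trans hy)
      have hstep := hκ.absPrimitive_le_add hdec (hax.trans hy) (by linarith : y ≤ 2 * y)
      have hgrow := mul_le_mul_of_nonneg_left (ha y hy).1 hA.le
      rw [← mul_assoc, hAq] at hgrow
      linarith
    · have hy_pos : 0 < y := hx₀.trans_le (hax.trans hy)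
      have hκy := (ha y hy).2.1
      have := hκ.monotone_absPrimitive hy2
      have : 0 < A * (y * κ y) := by positivity
      linarith
  refine IsBigO.of_bound (A + 1) ?_
  filter_upwards [eventually_ge_atTop a, hφ.eventually_ge_atTop (absPrimitive κ (2 * a)),
    hφ.eventually_ge_atTop 0] with x hx hxC hx_nonneg
  rw [Real.norm_of_nonneg (absPrimitive_nonneg κ (by linarith)), Real.norm_of_nonneg hx_nonneg]
  linarith [hupper hx]

lemma absPrimitive_isBigO_of_hasDerivAt (hκ : IsPositiveDefinite κ) {g g' : ℝ → ℝ}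
    (hg : Tendsto g atTop atTop) (hderiv : ∀ᶠ x in atTop, HasDerivAt g (g' x) x)
    (hg' : ∀ᶠ x in atTop, 0 ≤ g' x) (h : κ =O[atTop] g') : absPrimitive κ =O[atTop] g := by
  obtain ⟨C, hC⟩ := h.bound
  obtain ⟨X, hX⟩ := eventually_atTop.1 (hC.and (hderiv.and hg'))
  refine IsBigO.of_bound (C + 1) ?_
  filter_upwards [eventually_ge_atTop X, eventually_ge_atTop 0, hg.eventually_ge_atTop 0,
    hg.eventually_ge_atTop (absPrimitive κ X - C * g X)] with x hx hx_nonneg hg_nonneg hgx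
  have hsub : absPrimitive κ x - absPrimitive κ X ≤ C * g x - C * g X := by
    rw [hκ.absPrimitive_sub]
    refine intervalIntegral.integral_le_sub_of_hasDeriv_right_of_le hx
      (HasDerivAt.continuousOn fun t ht => (hX t ht.1).2.1.const_mul C)
      (fun t ht => ((hX t ht.1.le).2.1.const_mul C).hasDerivWithinAt)
      ((intervalIntegrable_iff_integrableOn_Icc_of_le hx).1 (hκ.intervalIntegrable X x).abs)
      fun t ht => ?_
    rw [← Real.norm_eq_abs, ← Real.norm_of_nonneg (hX t ht.1.le).2.2]
    exact (hX t ht.1.le).1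
  rw [Real.norm_of_nonneg (absPrimitive_nonneg κ hx_nonneg), Real.norm_of_nonneg hg_nonneg]
  linarith

lemma isBigO_absPrimitive_of_hasDerivAt (hκ : IsPositiveDefinite κ) {g g' : ℝ → ℝ}
    (hg : Tendsto g atTop atTop) (hderiv : ∀ᶠ x in atTop, HasDerivAt g (g' x) x)
    (h : g' =O[atTop] κ) : g =O[atTop] absPrimitive κ := by
  obtain ⟨C, hC_pos, hC⟩ := h.exists_pos
  obtain ⟨X, hX⟩ := eventually_atTop.1
    (hC.bound.and (hderiv.and (eventually_ge_atTop 0)))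
  have hX_nonneg : 0 ≤ X := (hX X le_rfl).2.2
  refine IsBigO.of_bound (2 * C) ?_
  filter_upwards [eventually_ge_atTop X, hg.eventually_ge_atTop 0,
    hg.eventually_ge_atTop (2 * g X)] with x hx hg_nonneg hgx
  have hsub : g x - g X ≤ C * (absPrimitive κ x - absPrimitive κ X) := by
    rw [hκ.absPrimitive_sub, ← intervalIntegral.integral_const_mul]
    exact intervalIntegral.sub_le_integral_of_hasDeriv_right_of_le hx
      (HasDerivAt.continuousOn fun t ht => (hX t ht.1).2.1)
      (fun t ht => (hX t ht.1.le).2.1.hasDerivWithinAt)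
      ((intervalIntegrable_iff_integrableOn_Icc_of_le hx).1
        ((hκ.intervalIntegrable X x).abs.const_mul C))
      fun t ht => (le_abs_self _).trans (hX t ht.1.le).1
  have hΦX : 0 ≤ C * absPrimitive κ X := mul_nonneg hC_pos.le (absPrimitive_nonneg κ hX_nonneg)
  rw [Real.norm_of_nonneg (absPrimitive_nonneg κ (hX_nonneg.trans hx)),
    Real.norm_of_nonneg hg_nonneg]
  linarith

lemma isTheta_absPrimitive_log_rpow (hκ : IsPositiveDefinite κ) {γ : ℝ} (hγ : γ < 1)
    (hκγ : κ ~[atTop] fun x => x⁻¹ * Real.log x ^ (-γ)) :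
    absPrimitive κ =Θ[atTop] fun x => Real.log x ^ (1 - γ) := by
  have hγ' : 0 < 1 - γ := sub_pos.2 hγ
  have htend : Tendsto (fun x => Real.log x ^ (1 - γ)) atTop atTop :=
    (tendsto_rpow_atTop hγ').comp Real.tendsto_log_atTop
  have hderiv : ∀ᶠ x in atTop, HasDerivAt (fun x => Real.log x ^ (1 - γ))
      ((1 - γ) * (x⁻¹ * Real.log x ^ (-γ))) x := by
    filter_upwards [eventually_gt_atTop 1] with x hx
    convert (Real.hasDerivAt_log (zero_lt_one.trans hx).ne').rpow_const (p := 1 - γ)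
      (Or.inl (Real.log_pos hx).ne') using 1
    rw [sub_sub_cancel_left]
    ring
  have hderiv_nonneg : ∀ᶠ x : ℝ in atTop, 0 ≤ (1 - γ) * (x⁻¹ * Real.log x ^ (-γ)) := by
    filter_upwards [eventually_gt_atTop 1] with x hx
    have := Real.log_pos hx
    positivity
  exact ⟨hκ.absPrimitive_isBigO_of_hasDerivAt htend hderiv hderiv_nonneg
      (hκγ.isTheta.1.const_mul_right hγ'.ne'),
    hκ.isBigO_absPrimitive_of_hasDerivAt htend hderiv (hκγ.isTheta.2.const_mul_left _)⟩

lemma tendsto_absPrimitive_of_isEquivalent (hκ : IsPositiveDefinite κ) {γ : ℝ} (hγ : γ < 1)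
    (hκγ : κ ~[atTop] fun x => x⁻¹ * Real.log x ^ (-γ)) :
    Tendsto (absPrimitive κ) atTop atTop := by
  have hnorm := (hκ.isTheta_absPrimitive_log_rpow hγ hκγ).tendsto_norm_atTop_iff.2 <|
    tendsto_norm_atTop_atTop.comp <|
      (tendsto_rpow_atTop (sub_pos.2 hγ)).comp Real.tendsto_log_atTop
  refine hnorm.congr' ?_
  filter_upwards [eventually_ge_atTop 0] with x hx
  exact Real.norm_of_nonneg (absPrimitive_nonneg κ hx)

lemma isTheta_absPrimitive_mul_log (hκ : IsPositiveDefinite κ) {γ : ℝ} (hγ : γ < 1)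
    (hκγ : κ ~[atTop] fun x => x⁻¹ * Real.log x ^ (-γ)) :
    absPrimitive κ =Θ[atTop] fun x => x * κ x * Real.log x := by
  have hlog : (fun x => Real.log x ^ (1 - γ)) =ᶠ[atTop]
      fun x => x * (x⁻¹ * Real.log x ^ (-γ)) * Real.log x := by
    filter_upwards [eventually_gt_atTop 1] with x hx
    rw [mul_inv_cancel_left₀ (zero_lt_one.trans hx).ne', ← Real.rpow_add_one (Real.log_pos hx).ne',
      neg_add_eq_sub]
  exact ((hκ.isTheta_absPrimitive_log_rpow hγ hκγ).trans_eventuallyEq hlog).trans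
    (((isTheta_refl _ _).mul hκγ.symm.isTheta).mul (isTheta_refl _ _))

end IsPositiveDefinite

lemma isLittleO_absPrimitive_of_isTheta {κ w r s : ℝ → ℝ} (hs : Tendsto s atTop atTop)
    (hΦ : absPrimitive κ =Θ[atTop] fun x => x * κ x * w x)
    (h : (fun R => r R * κ (s R) * w (s R)) =o[atTop] fun R => R * κ R * w R) :
    (fun R => r R * (absPrimitive κ (s R) / s R)) =o[atTop] absPrimitive κ := by
  have hΦs : (fun R => absPrimitive κ (s R)) =Θ[atTop] fun R => s R * κ (s R) * w (s R) :=
    ⟨hΦ.1.comp_tendsto hs, hΦ.2.comp_tendsto hs⟩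
  have hcancel : (fun R => r R * (s R * κ (s R) * w (s R) / s R)) =ᶠ[atTop]
      fun R => r R * κ (s R) * w (s R) := by
    filter_upwards [hs.eventually_ne_atTop 0] with R hR
    field_simp
  exact (((isTheta_refl r _).mul (hΦs.div (isTheta_refl s _))).trans_eventuallyEq
    hcancel).trans_isLittleO (h.trans_isTheta hΦ.symm)

namespace RegularlyVarying

variable {k : ℝ → ℝ} {α : ℝ}

lemma congr {k' : ℝ → ℝ} (hk : RegularlyVarying k α) (h : Set.EqOn k k' (Set.Ioi 0)) :
    RegularlyVarying k' α := by
  obtain ⟨hcont, L, hL, hlim⟩ := hk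
  refine ⟨hcont.congr h.symm, L, hL, hlim.congr' ?_⟩
  filter_upwards [eventually_gt_atTop 0] with x hx
  rw [h hx]

lemma eventually_pos (hk : RegularlyVarying k α) : ∀ᶠ x in atTop, 0 < k x := by
  obtain ⟨-, L, ⟨-, hL, -⟩, hlim⟩ := hk
  filter_upwards [eventually_gt_atTop 0, hlim.eventually_const_lt zero_lt_one] with x hx hdiv
  exact (div_pos_iff_of_pos_right (mul_pos (Real.rpow_pos_of_pos hx _) (hL x hx))).1 hdiv

lemma tendsto_comp_mul_left_div (hk : RegularlyVarying k α) {a : ℝ} (ha : 0 < a) :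
    Tendsto (fun x => k (a * x) / k x) atTop (nhds (a ^ (-α))) := by
  have hpos := hk.eventually_pos
  obtain ⟨-, L, ⟨-, hL, hLa⟩, hlim⟩ := hk
  have hprod := ((hlim.comp (tendsto_id.const_mul_atTop ha)).div hlim one_ne_zero).mul
    ((hLa a ha).const_mul (a ^ (-α)))
  rw [div_one, one_mul, mul_one] at hprod
  refine hprod.congr' ?_
  filter_upwards [eventually_gt_atTop 0, hpos] with x hx hkx
  have hLx := hL x hx
  have hLax := hL (a * x) (mul_pos ha hx)
  have := Real.rpow_pos_of_pos hx (-α)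
  have := Real.rpow_pos_of_pos ha (-α)
  simp only [Function.comp_apply, id_eq, Pi.div_apply, Real.mul_rpow ha.le hx.le]
  field_simp

lemma exists_eventually_mul_le_comp_two_mul (hk : RegularlyVarying k α) (hα : α < 1) :
    ∃ q, 1 < q ∧ ∀ᶠ x in atTop, q * (x * k x) ≤ 2 * x * k (2 * x) := by
  have hlim : (1 : ℝ) / 2 < 2 ^ (-α) := by
    rw [one_div, ← Real.rpow_neg_one]
    exact Real.rpow_lt_rpow_of_exponent_lt one_lt_two (neg_lt_neg hα)
  obtain ⟨c, hc, hcα⟩ := exists_between hlim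
  refine ⟨2 * c, by linarith, ?_⟩
  filter_upwards [(hk.tendsto_comp_mul_left_div two_pos).eventually_const_lt hcα,
    hk.eventually_pos, eventually_gt_atTop 0] with x hx hkx hx_pos
  rw [lt_div_iff₀ hkx] at hx
  calc 2 * c * (x * k x) = 2 * x * (c * k x) := by ring
    _ ≤ 2 * x * k (2 * x) := by gcongr

lemma almostDecreasing (hk : RegularlyVarying k α) (hα : α ≤ 1)
    (hratio : ∀ ε : ℝ, 0 < ε → ∃ r₀ : ℝ, ∀ x y : ℝ, r₀ ≤ x → x ≤ y → k y / k x - 1 ≤ ε) :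
    AlmostDecreasing k := by
  intro Θ hΘ
  obtain ⟨l, hl, hlΘ⟩ := exists_between (Real.lt_sqrt_of_sq_lt (by simpa using hΘ) : 1 < √Θ)
  have hl_pos : 0 < l := by linarith
  have hlim : l⁻¹ ^ (-α) < √Θ :=
    calc l⁻¹ ^ (-α) = l ^ α := by rw [Real.inv_rpow hl_pos.le, Real.rpow_neg hl_pos.le, inv_inv]
      _ ≤ l := Real.rpow_le_self_of_one_le hl.le hα
      _ < √Θ := hlΘ
  obtain ⟨r₀, hr₀⟩ := hratio (√Θ - 1) (by linarith)
  have hdiv : Tendsto (fun t => l⁻¹ * t) atTop atTop :=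
    tendsto_id.const_mul_atTop (inv_pos.2 hl_pos)
  refine ⟨l, hl, ?_⟩
  filter_upwards [(hk.tendsto_comp_mul_left_div (inv_pos.2 hl_pos)).eventually_lt_const hlim,
    hk.eventually_pos, hdiv.eventually hk.eventually_pos, hdiv.eventually_ge_atTop r₀]
    with t hscale hkt hklt hlt t' ht'
  rw [div_eq_inv_mul] at ht'
  calc k t' ≤ √Θ * k (l⁻¹ * t) := by
        rw [← div_le_iff₀ hklt]
        linarith [hr₀ _ t' hlt ht']
    _ ≤ √Θ * (√Θ * k t) := by
        gcongr
        exact ((div_lt_iff₀ hkt).1 hscale).le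
    _ = Θ * k t := by rw [← mul_assoc, Real.mul_self_sqrt (by linarith)]

end RegularlyVarying

lemma IsPositiveDefinite.tendsto_minEnergy_condensedSet_div_of_regularlyVarying {κ : ℝ → ℝ}
    (hκ : IsPositiveDefinite κ) {α : ℝ} (hα : α ≤ 1) (hrv : RegularlyVarying κ α)
    (hcrit : α = 1 → ∃ γ : ℝ, γ < 1 ∧
      Tendsto (fun x => κ x / (x⁻¹ * Real.log x ^ (-γ))) atTop (nhds 1))
    (hratio : ∀ ε : ℝ, 0 < ε → ∃ r₀ : ℝ, ∀ x y : ℝ, r₀ ≤ x → x ≤ y → κ y / κ x - 1 ≤ ε)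
    {r s : ℝ → ℝ} (hs : Tendsto s atTop atTop) (hsr : ∀ᶠ R in atTop, s R ≤ r R)
    (hsub : α < 1 → (fun R => r R * κ (s R)) =o[atTop] fun R => R * κ R)
    (hlog : α = 1 → (fun R => r R * κ (s R) * Real.log (s R)) =o[atTop]
      fun R => R * κ R * Real.log R) :
    Tendsto (fun R => minEnergy κ (condensedSet (s R) (r R) R) / minEnergy κ (Set.Icc 0 R)) atTop
      (nhds 1) := by
  have hdec := hrv.almostDecreasing hα hratio
  rcases hα.lt_or_eq with hα | hα
  · obtain ⟨q, hq, hgrowth⟩ := hrv.exists_eventually_mul_le_comp_two_mul hα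
    have hpos := hrv.eventually_pos
    have hΘ : absPrimitive κ =Θ[atTop] fun x => x * κ x * 1 := by
      simpa only [mul_one] using ⟨hκ.absPrimitive_isBigO_mul_self hdec hpos hq hgrowth,
        hκ.mul_self_isBigO_absPrimitive hdec⟩
    exact hκ.tendsto_minEnergy_condensedSet_div hdec
      (hκ.tendsto_absPrimitive hdec (hdec.tendsto_mul_self_atTop hpos hq hgrowth)) hs hsr
      (isLittleO_absPrimitive_of_isTheta hs hΘ (by simpa only [mul_one] using hsub hα))
  · obtain ⟨γ, hγ, hκγ⟩ := hcrit hα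
    have hequiv : κ ~[atTop] fun x => x⁻¹ * Real.log x ^ (-γ) :=
      isEquivalent_of_tendsto_one hκγ
    exact hκ.tendsto_minEnergy_condensedSet_div hdec
      (hκ.tendsto_absPrimitive_of_isEquivalent hγ hequiv) hs hsr
      (isLittleO_absPrimitive_of_isTheta hs (hκ.isTheta_absPrimitive_mul_log hγ hequiv) (hlog hα))

section MeasurableEmbedding

variable {G H : Type*} [AddGroup G] [AddGroup H] [MeasurableSpace G] [MeasurableSpace H]
  {F : Type*} [FunLike F G H] [AddMonoidHomClass F G H] {f : F}

lemma mutualEnergy_map (hf : MeasurableEmbedding f) (κ : H → ℝ) (μ ν : Measure G) :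
    mutualEnergy κ (μ.map f) (ν.map f) = mutualEnergy (fun t => κ (f t)) μ ν := by
  simp only [mutualEnergy, potential, hf.integral_map, map_sub]

lemma minEnergy_image (hf : MeasurableEmbedding f) (κ : H → ℝ) (D : Set G) :
    minEnergy κ (f '' D) = minEnergy (fun t => κ (f t)) D := by
  refine congrArg sInf (Set.ext fun e => ⟨?_, ?_⟩)
  · rintro ⟨μ, hμ, hμD, rfl⟩
    have hrange : μ (Set.range f)ᶜ = 0 :=
      measure_mono_null (Set.compl_subset_compl.2 (Set.image_subset_range f D)) hμD
    have hmap : (μ.comap f).map f = μ := by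
      rw [hf.map_comap]
      exact Measure.restrict_eq_self_of_ae_mem hrange
    refine ⟨μ.comap f, ⟨?_⟩, ?_, ?_⟩
    · rw [hf.comap_apply, Set.image_univ, ← prob_compl_eq_zero_iff hf.measurableSet_range, hrange]
    · rw [hf.comap_apply]
      exact measure_mono_null (Set.image_compl_subset hf.injective) hμD
    · rw [← mutualEnergy_map hf, hmap]
  · rintro ⟨ν, hν, hνD, rfl⟩
    refine ⟨ν.map f, Measure.isProbabilityMeasure_map hf.measurable.aemeasurable, ?_,
      (mutualEnergy_map hf κ ν ν).symm⟩
    rwa [hf.map_apply, Set.preimage_compl, Set.preimage_image_eq D hf.injective]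

end MeasurableEmbedding

section FirstAxis

variable (d : ℕ) [NeZero d]

/-- The inclusion of `ℝ` into `ℝ^d` as the first coordinate axis, so that
`lineEmbed d S = firstAxis d '' S`. -/
noncomputable def firstAxis : ℝ →ₗᵢ[ℝ] EuclideanSpace ℝ (Fin d) :=
  LinearIsometry.toSpanSingleton ℝ _ (v := EuclideanSpace.single 0 1) (by simp)

lemma firstAxis_apply (t : ℝ) (i : Fin d) : firstAxis d t i = if (i : ℕ) = 0 then t else 0 := by
  simp [firstAxis, Fin.val_eq_zero_iff]

lemma lineEmbed_eq_image (S : Set ℝ) : lineEmbed d S = firstAxis d '' S := by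
  ext x
  constructor
  · refine fun hx => ⟨x 0, by simpa using hx 0, ?_⟩
    ext i
    have hxi := hx i
    rw [firstAxis_apply]
    split_ifs at hxi ⊢ with hi
    · rw [Fin.val_eq_zero_iff.1 hi]
    · exact hxi.symm
  · rintro ⟨t, ht, rfl⟩ i
    rw [firstAxis_apply]
    split_ifs with hi
    exacts [ht, rfl]

lemma capacityE_lineEmbed (K : EuclideanSpace ℝ (Fin d) → ℝ) (S : Set ℝ) :
    capacityE K (lineEmbed d S) = (minEnergy (fun t => K (firstAxis d t)) S)⁻¹ := by
  rw [lineEmbed_eq_image,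
    ← minEnergy_image (firstAxis d).isometry.isClosedEmbedding.measurableEmbedding]
  rfl

end FirstAxis

lemma IsPosDefKernel.isPositiveDefinite_firstAxis {d : ℕ} [NeZero d]
    {K : EuclideanSpace ℝ (Fin d) → ℝ} (hpd : IsPosDefKernel K) (hcont : Continuous K)
    (heven : ∀ x, K (-x) = K x) : IsPositiveDefinite fun t => K (firstAxis d t) where
  measurable := (hcont.comp (firstAxis d).continuous).measurable
  even t := by rw [map_neg, heven]
  sum_nonneg n x c := by
    simpa only [map_sub] using hpd n (fun i => firstAxis d (x i)) c

theorem statement11_general (d : ℕ) [NeZero d] (K : EuclideanSpace ℝ (Fin d) → ℝ) (k : ℝ → ℝ)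
    (hcont : Continuous K) (hrad : ∀ x, K x = k ‖x‖) (hpd : IsPosDefKernel K)
    (α : ℝ) (hα : α ≤ 1) (hrv : RegularlyVarying k α)
    (hcrit : α = 1 → ∃ γ : ℝ, γ < 1 ∧
      Tendsto (fun x => k x / (x⁻¹ * Real.log x ^ (-γ))) atTop (nhds 1))
    (hratio : ∀ ε : ℝ, 0 < ε → ∃ r₀ : ℝ, ∀ x y : ℝ, r₀ ≤ x → x ≤ y → k y / k x - 1 ≤ ε)
    (r s : ℝ → ℝ) (hs : Tendsto s atTop atTop) (hsr : ∀ᶠ R in atTop, s R ≤ r R)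
    (hsub : α < 1 → (fun R => r R * k (s R)) =o[atTop] fun R => R * k R)
    (hlog : α = 1 → (fun R => r R * k (s R) * Real.log (s R)) =o[atTop]
      fun R => R * k R * Real.log R) :
    Tendsto (fun R => capacityE K (lineEmbed d (Set.Icc 0 R)) /
      capacityE K (lineEmbed d (condensedSet (s R) (r R) R))) atTop (nhds 1) := by
  simp only [capacityE_lineEmbed, inv_div_inv]
  have hpd := hpd.isPositiveDefinite_firstAxis hcont fun x => by rw [hrad, hrad, norm_neg]
  have hprofile {t : ℝ} (ht : 0 ≤ t) : k t = K (firstAxis d t) := by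
    rw [hrad, LinearIsometry.norm_map, Real.norm_of_nonneg ht]
  have hk : k =ᶠ[atTop] fun t => K (firstAxis d t) :=
    (eventually_ge_atTop 0).mono fun _ => hprofile
  have hks := hk.comp_tendsto hs
  refine hpd.tendsto_minEnergy_condensedSet_div_of_regularlyVarying hα
    (hrv.congr fun t ht => hprofile (le_of_lt ht)) (fun h => ?_) (fun ε hε => ?_) hs hsr
    (fun h => ?_) (fun h => ?_)
  · exact (hcrit h).imp fun γ hγ => ⟨hγ.1, hγ.2.congr' (hk.div .rfl)⟩
  · obtain ⟨r₀, hr₀⟩ := hratio ε hε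
    refine ⟨max r₀ 0, fun x y hx hxy => ?_⟩
    obtain ⟨hx₀, hx_nonneg⟩ := max_le_iff.1 hx
    rw [← hprofile hx_nonneg, ← hprofile (hx_nonneg.trans hxy)]
    exact hr₀ x y hx₀ hxy
  · exact (hsub h).congr' (.mul .rfl hks) (.mul .rfl hk)
  · exact (hlog h).congr' (.mul (.mul .rfl hks) .rfl) (.mul (.mul .rfl hk) .rfl)

/-- Condensation: under the stated regular variation and coarse-graining
conditions, `Cap_K([0,R] × {0}^{d-1}) ∼ Cap_K(𝒮_{s(R),r(R),R} × {0}^{d-1})` as `R → ∞`. -/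
theorem statement11 (d : ℕ) (hd : 2 ≤ d)
    (K : EuclideanSpace ℝ (Fin d) → ℝ) (k : ℝ → ℝ)
    (hcont : Continuous K) (hrad : ∀ x, K x = k ‖x‖) (hpd : IsPosDefKernel K)
    (α : ℝ) (hα0 : 0 ≤ α) (hα1 : α ≤ 1) (hrv : RegularlyVarying k α)
    (hcrit : α = 1 → ∃ γ : ℝ, γ < 1 ∧
      Tendsto (fun x => k x / (x⁻¹ * Real.log x ^ (-γ))) atTop (nhds 1))
    (hratio : ∀ ε : ℝ, 0 < ε → ∃ r₀ : ℝ, ∀ x y : ℝ, r₀ ≤ x → x ≤ y →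
      k y / k x - 1 ≤ ε)
    (r s : ℝ → ℝ) (hr : Tendsto r atTop atTop) (hs : Tendsto s atTop atTop)
    (hsr : ∀ R : ℝ, 0 < R → s R ≤ r R ∧ r R ≤ R)
    (hcase0 : α < 1 →
      ((fun R => r R) =o[atTop] (fun R : ℝ => R)) ∧
      ((fun R => r R * k (s R)) =o[atTop] (fun R => R * k R)))
    (hcase1 : α = 1 →
      (Tendsto (fun R => Real.log (max (r R) 2) / Real.log R) atTop (nhds 0)) ∧
      ((fun R => r R * k (s R) * Real.log (s R)) =o[atTop]
        (fun R => R * k R * Real.log R))) :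
    Tendsto (fun R =>
        capacityE K (lineEmbed d (Set.Icc 0 R)) /
          capacityE K (lineEmbed d (condensedSet (s R) (r R) R)))
      atTop (nhds 1) := by
  have : NeZero d := ⟨by omega⟩
  exact statement11_general d K k hcont hrad hpd α hα1 hrv hcrit hratio r s hs
    ((eventually_gt_atTop 0).mono fun R hR => (hsr R hR).1) (fun h => (hcase0 h).2)
    fun h => (hcase1 h).2
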